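/- arXiv:1701.02168 — 2 statements merged into one kernel-verified Lean document; each statement's English description precedes it below -/
import Mathlib

section
/- Let L be recognized by a parity automaton with costs A over Σ_I × Σ_O with n states and k colors, where Ω(Q) contains both an even and an odd color, and let f be the constant delay function with f(0) = 2^{2n⁴k²+1}. Then the following are equivalent: (1) Player I wins Γ_f(L(A)); (2) Player I wins Γ_{f'}(L(A)) for every delay function f'. -/
attribute [local instance] Classical.propDecidable

noncomputable section

/-- A parity automaton with costs `(Q, A, qI, δ, Ω, Cst)`.
`Cst q a = true` means that the transition `(q, a, δ q a)` is an increment-transition,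
`Cst q a = false` means it is an `ε`-transition. -/
structure PACost (Q : Type) (A : Type) where
  qI : Q
  δ : Q → A → Q
  Ω : Q → ℕ
  Cst : Q → A → Bool

namespace PACost

variable {Q A : Type}

/-- The state reached after processing the first `n` letters of `w` starting in `q0`. -/
def stateAt (M : PACost Q A) (q0 : Q) (w : ℕ → A) : ℕ → Q
  | 0 => q0
  | n + 1 => M.δ (stateAt M q0 w n) (w n)

/-- The cost (number of increment-transitions) of the run infix between positions `m` and `n`. -/
def segCost (M : PACost Q A) (q0 : Q) (w : ℕ → A) (m n : ℕ) : ℕ :=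
  ((Finset.Ico m n).filter fun j => M.Cst (stateAt M q0 w j) (w j) = true).card

/-- `Ans c`: the set of even colors of `M` that are larger than `c`. -/
def Ans (M : PACost Q A) (c : ℕ) : Set ℕ :=
  { c' | (∃ q, M.Ω q = c') ∧ c < c' ∧ Even c' }

/-- The cost-of-response at position `n` of the run of `M` on `w` starting in `q0`. -/
def Cor (M : PACost Q A) (q0 : Q) (w : ℕ → A) (n : ℕ) : ℕ∞ :=
  if Even (M.Ω (stateAt M q0 w n)) then 0
  else
    sInf { c : ℕ∞ | ∃ n', n < n' ∧
      M.Ω (stateAt M q0 w n') ∈ M.Ans (M.Ω (stateAt M q0 w n)) ∧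
      c = (segCost M q0 w n n' : ℕ∞) }

/-- The run of `M` on `w` starting in `q0` satisfies the parity condition with costs. -/
def Accepting (M : PACost Q A) (q0 : Q) (w : ℕ → A) : Prop :=
  Filter.limsup (fun n => Cor M q0 w n) Filter.atTop < ⊤

/-- The language of `M`. -/
def Lang (M : PACost Q A) : Set (ℕ → A) := { w | Accepting M M.qI w }

/-- `M` is a finitary Büchi automaton: every transition is an increment-transition and
all colors are `1` or `2`. -/
def FinBuchi (M : PACost Q A) : Prop :=
  (∀ q a, M.Cst q a = true) ∧ ∀ q, M.Ω q = 1 ∨ M.Ω q = 2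

end PACost

/-- The finite segment `w m, w (m+1), …, w (n-1)` of an infinite word `w`. -/
def seg {A : Type} (w : ℕ → A) (m n : ℕ) : List A :=
  (List.range (n - m)).map fun i => w (m + i)

section DelayGames

variable {I O : Type}

/-- The `n`-th letter of the concatenation `u 0 ++ u 1 ++ u 2 ++ ⋯`
(well-defined whenever all blocks are non-empty). -/
def flatWord [Inhabited I] (u : ℕ → List I) (n : ℕ) : I :=
  (((List.range (n + 1)).map u).flatten).getD n default

/-- A delay function maps every round to a positive number of letters. -/
def DelayFn (f : ℕ → ℕ) : Prop := ∀ i, 0 < f i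

/-- The constant delay function `f_k` with `f_k 0 = k + 1` and `f_k i = 1` for `i > 0`. -/
def constDF (k : ℕ) : ℕ → ℕ := fun i => if i = 0 then k + 1 else 1

/-- The sequence of letters Player I has produced up to (and including) round `i`. -/
def oHist (u : ℕ → List I) (i : ℕ) : List I := ((List.range (i + 1)).map u).flatten

/-- `τO` is a winning strategy for Player O in the delay game with delay function `f`
and winning condition `L`. -/
def OWinning [Inhabited I] (f : ℕ → ℕ) (L : Set (ℕ → I × O)) (τO : List I → O) : Prop :=
  ∀ u : ℕ → List I, ∀ v : ℕ → O,
    (∀ i, (u i).length = f i) →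
    (∀ i, v i = τO (oHist u i)) →
    (fun n => (flatWord u n, v n)) ∈ L

/-- Player O wins the delay game `Γ_f(L)`. -/
def OWins [Inhabited I] (f : ℕ → ℕ) (L : Set (ℕ → I × O)) : Prop :=
  ∃ τO : List I → O, OWinning f L τO

/-- `τI` is a winning strategy for Player I in the delay game with delay function `f`
and winning condition `L`. -/
def IWinning [Inhabited I] (f : ℕ → ℕ) (L : Set (ℕ → I × O)) (τI : List O → List I) : Prop :=
  (∀ w, (τI w).length = f w.length) ∧
  ∀ u : ℕ → List I, ∀ v : ℕ → O,
    (∀ i, u i = τI ((List.range i).map v)) →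
    (fun n => (flatWord u n, v n)) ∉ L

/-- Player I wins the delay game `Γ_f(L)`. -/
def IWins [Inhabited I] (f : ℕ → ℕ) (L : Set (ℕ → I × O)) : Prop :=
  ∃ τI : List O → List I, IWinning f L τI

/-- The cost of a strategy `τO` of Player O: the supremum of the word-costs `wc` of the
outcomes of plays consistent with `τO`. -/
def stratCost [Inhabited I] (wc : (ℕ → I × O) → ℕ∞) (f : ℕ → ℕ) (τO : List I → O) : ℕ∞ :=
  ⨆ (u : ℕ → List I) (v : ℕ → O)
    (_ : (∀ i, (u i).length = f i) ∧ ∀ i, v i = τO (oHist u i)),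
    wc (fun n => (flatWord u n, v n))

/-- An optimal winning strategy for Player O in `Γ_f(L)` exists and has cost `c`. -/
def OptimalCostIs [Inhabited I] (L : Set (ℕ → I × O)) (wc : (ℕ → I × O) → ℕ∞)
    (f : ℕ → ℕ) (c : ℕ∞) : Prop :=
  (∃ τO, OWinning f L τO ∧ stratCost wc f τO = c) ∧
  ∀ τO, OWinning f L τO → c ≤ stratCost wc f τO

end DelayGames

/-! ### Slices of infinite words -/

section Aux

/-- The slice of `w` of length `l` starting at position `s`. -/
def sl {A : Type} (w : ℕ → A) (s l : ℕ) : List A := (List.range l).map fun i => w (s + i)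

/-- The extension of a finite word by a default letter. -/
def extW {A : Type} [Inhabited A] (v : List A) : ℕ → A := fun m => v.getD m default

theorem sl_length {A : Type} (w : ℕ → A) (s l : ℕ) : (sl w s l).length = l := by simp [sl]

theorem sl_succ {A : Type} (w : ℕ → A) (s l : ℕ) : sl w s (l + 1) = sl w s l ++ [w (s + l)] := by
  simp [sl, List.range_succ]

theorem sl_add {A : Type} (w : ℕ → A) (s l m : ℕ) :
    sl w s (l + m) = sl w s l ++ sl w (s + l) m := by
  simp [sl, List.range_add, Function.comp_def, add_assoc]

theorem sl_congr {A : Type} {w w' : ℕ → A} {s l : ℕ} (h : ∀ m, s ≤ m → m < s + l → w m = w' m) :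
    sl w s l = sl w' s l := by
  unfold sl
  apply List.map_congr_left
  intro i hi
  have := List.mem_range.1 hi
  exact h _ (by omega) (by omega)

theorem sl_getD {A : Type} (w : ℕ → A) (l n : ℕ) (x : A) (h : n < l) :
    (sl w 0 l).getD n x = w n := by
  simp [sl, List.getD, h]

theorem extW_sl {A : Type} [Inhabited A] (w : ℕ → A) (l n : ℕ) (h : n < l) :
    extW (sl w 0 l) n = w n := sl_getD w l n default h

theorem sl_zip {A B : Type} (a : ℕ → A) (b : ℕ → B) (s l : ℕ) :
    (sl a s l).zip (sl b s l) = sl (fun n => (a n, b n)) s l := by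
  induction l with
  | zero => rfl
  | succ l ih =>
    rw [sl_succ, sl_succ, sl_succ, List.zip_append (by simp [sl_length]), ih]; rfl

/-- The limit of a chain of finite words. -/
theorem chain_limit {A : Type} [Inhabited A] (L : ℕ → List A) (hp : ∀ j, L j <+: L (j + 1))
    (hl : ∀ j, j ≤ (L j).length) : ∃ a : ℕ → A, (∀ j, L j = sl a 0 (L j).length) ∧
      ∀ m, a m = extW (L (m + 1)) m := by
  refine ⟨fun m => extW (L (m + 1)) m, ?_, fun _ => rfl⟩
  have hmono : ∀ i j, i ≤ j → L i <+: L j := by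
    intro i j hij
    induction hij with
    | refl => exact List.prefix_rfl
    | step _ ih => exact ih.trans (hp _)
  have key : ∀ i j m, m < (L i).length → m < (L j).length → (L i)[m]? = (L j)[m]? := by
    intro i j m hi hj
    rcases le_total i j with h | h
    · obtain ⟨t, ht⟩ := hmono i j h
      rw [← ht, List.getElem?_append_left hi]
    · obtain ⟨t, ht⟩ := hmono j i h
      rw [← ht, List.getElem?_append_left hj]
  intro j
  apply List.ext_getElem?
  intro m
  by_cases hm : m < (L j).length
  · have h1 : m < (L (m + 1)).length := lt_of_lt_of_le (Nat.lt_succ_self m) (hl (m + 1))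
    rw [key j (m + 1) m hm h1]
    simp [sl, hm, extW, List.getD, h1]
  · rw [List.getElem?_eq_none (by omega), List.getElem?_eq_none (by rw [sl_length]; omega)]

/-! ### Causal maps and strategies of Player I -/

/-- A map from words of Player O to words of Player I respecting the delay function `f`. -/
def Causal {I O : Type} (f : ℕ → ℕ) (G : (ℕ → O) → (ℕ → I)) : Prop :=
  ∀ β β' i, (∀ m, m < i → β m = β' m) →
    ∀ m, m < ∑ l ∈ Finset.range (i + 1), f l → G β m = G β' m

theorem flat_length {I : Type} (u : ℕ → List I) (f : ℕ → ℕ) (h : ∀ i, (u i).length = f i) (n : ℕ) :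
    (((List.range n).map u).flatten).length = ∑ l ∈ Finset.range n, f l := by
  induction n with
  | zero => simp
  | succ n ih =>
    rw [Finset.sum_range_succ, ← ih, List.range_succ]
    simp [h]

theorem flat_getD {I : Type} (u : ℕ → List I) (a b : ℕ) (hab : a ≤ b) (m : ℕ) (x : I)
    (hm : m < (((List.range a).map u).flatten).length) :
    (((List.range b).map u).flatten).getD m x = (((List.range a).map u).flatten).getD m x := by
  obtain ⟨c, rfl⟩ := Nat.exists_eq_add_of_le hab
  rw [List.range_add, List.map_append, List.flatten_append, List.getD_append _ _ _ _ hm]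

theorem le_sum_delay {f : ℕ → ℕ} (hf : DelayFn f) (n : ℕ) : n ≤ ∑ l ∈ Finset.range n, f l := by
  induction n with
  | zero => simp
  | succ n ih =>
    rw [Finset.sum_range_succ]
    have := hf n
    omega

theorem flatWord_eq {I : Type} [Inhabited I] {f : ℕ → ℕ} (hf : DelayFn f) (u : ℕ → List I)
    (h : ∀ i, (u i).length = f i) (i m : ℕ) (hm : m < ∑ l ∈ Finset.range (i + 1), f l) :
    flatWord u m = (((List.range (i + 1)).map u).flatten).getD m default := by
  unfold flatWord
  have h1 : m < (((List.range (m + 1)).map u).flatten).length := by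
    rw [flat_length u f h]
    exact le_sum_delay hf (m + 1)
  rcases le_total m i with hmi | hmi
  · exact (flat_getD u (m + 1) (i + 1) (by omega) m default h1).symm
  · exact flat_getD u (i + 1) (m + 1) (by omega) m default (by rw [flat_length u f h]; exact hm)

theorem causal_of_IWins {I O : Type} [Inhabited I] {f : ℕ → ℕ} (hf : DelayFn f)
    {L : Set (ℕ → I × O)} (h : IWins f L) :
    ∃ G : (ℕ → O) → (ℕ → I), Causal f G ∧ ∀ β, (fun n => (G β n, β n)) ∉ L := by
  obtain ⟨τ, hτ, hw⟩ := h
  refine ⟨fun β => flatWord fun i => τ ((List.range i).map β), ?_, fun β => hw _ β fun i => rfl⟩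
  intro β β' i hb m hm
  have hlen : ∀ (b : ℕ → O) (i : ℕ), (τ ((List.range i).map b)).length = f i := by
    intro b i
    rw [hτ]; simp
  simp only
  rw [flatWord_eq hf _ (hlen β) i m hm, flatWord_eq hf _ (hlen β') i m hm]
  congr 2
  apply List.map_congr_left
  intro j hj
  have hj := List.mem_range.1 hj
  congr 1
  apply List.map_congr_left
  intro l hl
  have hl := List.mem_range.1 hl
  exact hb l (by omega)

theorem IWins_of_causal {I O : Type} [Inhabited I] [Inhabited O] {f : ℕ → ℕ} (hf : DelayFn f)
    {L : Set (ℕ → I × O)} (G : (ℕ → O) → (ℕ → I)) (hG : Causal f G)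
    (hw : ∀ β, (fun n => (G β n, β n)) ∉ L) : IWins f L := by
  refine ⟨fun v => sl (G (extW v)) (∑ l ∈ Finset.range v.length, f l) (f v.length), ?_, ?_⟩
  · intro w
    rw [sl_length]
  · intro u v hu
    have hu' : ∀ i, u i = sl (G v) (∑ l ∈ Finset.range i, f l) (f i) := by
      intro i
      rw [hu i]
      have hlen : ((List.range i).map v).length = i := by simp
      simp only [hlen]
      apply sl_congr
      intro m _ hm
      apply hG _ _ i
      · intro m hm
        have := extW_sl v i m hm
        simpa [sl] using this
      · rw [Finset.sum_range_succ]; exact hm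
    have hflat : ∀ n, ((List.range n).map u).flatten = sl (G v) 0 (∑ l ∈ Finset.range n, f l) := by
      intro n
      induction n with
      | zero => rfl
      | succ n ih =>
        rw [Finset.sum_range_succ, sl_add, List.range_succ, List.map_append, List.flatten_append, ih,
          zero_add]
        simp [hu' n]
    have : (fun n => (flatWord u n, v n)) = fun n => (G v n, v n) := by
      funext n
      congr 1
      unfold flatWord
      rw [hflat]
      exact sl_getD _ _ _ _ (le_sum_delay hf (n + 1))
    rw [this]
    exact hw v

/-! ### The tracking automaton -/

variable {Q I O A : Type}

/-- One step of the automaton tracking, over a block: the state, the largest even color seen,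
the largest odd color with a pending request (`0` meaning none), and whether an increment occurred. -/
def trk (M : PACost Q A) (t : Q × ℕ × ℕ × Bool) (a : A) : Q × ℕ × ℕ × Bool :=
  (M.δ t.1 a, (if Even (M.Ω t.1) then max t.2.1 (M.Ω t.1) else t.2.1),
    (if Even (M.Ω t.1) then (if t.2.2.1 < M.Ω t.1 then 0 else t.2.2.1) else max t.2.2.1 (M.Ω t.1)),
    t.2.2.2 || M.Cst t.1 a)

/-- The tracking information of a block starting in `q`. -/
def info (M : PACost Q A) (q : Q) (x : List A) : Q × ℕ × ℕ × Bool :=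
  x.foldl (trk M) (q, 0, 0, false)

/-- The tracking information of the block of `w` starting at `s` of length `l`. -/
def blk (M : PACost Q A) (w : ℕ → A) (s l : ℕ) : Q × ℕ × ℕ × Bool :=
  info M (M.stateAt M.qI w s) (sl w s l)

theorem blk_succ (M : PACost Q A) (w : ℕ → A) (s l : ℕ) :
    blk M w s (l + 1) = trk M (blk M w s l) (w (s + l)) := by
  simp [blk, info, sl_succ]

theorem blk_state (M : PACost Q A) (w : ℕ → A) (s l : ℕ) :
    (blk M w s l).1 = M.stateAt M.qI w (s + l) := by
  induction l with
  | zero => rfl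
  | succ l ih =>
    rw [blk_succ]
    simp only [trk, ih]
    rfl

theorem blk_even (M : PACost Q A) (w : ℕ → A) (s l c : ℕ) :
    c < (blk M w s l).2.1 ↔ ∃ m, s ≤ m ∧ m < s + l ∧ Even (M.Ω (M.stateAt M.qI w m)) ∧
      c < M.Ω (M.stateAt M.qI w m) := by
  induction l with
  | zero =>
    constructor
    · intro h; simp [blk, info, sl] at h
    · rintro ⟨m, h1, h2, _⟩; omega
  | succ l ih =>
    rw [blk_succ]
    have hs := blk_state M w s l
    simp only [trk, hs]
    constructor
    · intro h
      split_ifs at h with he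
      · rcases lt_max_iff.1 h with h | h
        · obtain ⟨m, h1, h2, h3⟩ := ih.1 h
          exact ⟨m, h1, by omega, h3⟩
        · exact ⟨s + l, by omega, by omega, he, h⟩
      · obtain ⟨m, h1, h2, h3⟩ := ih.1 h
        exact ⟨m, h1, by omega, h3⟩
    · rintro ⟨m, h1, h2, h3, h4⟩
      rcases Nat.lt_or_ge m (s + l) with h | h
      · have := ih.2 ⟨m, h1, h, h3, h4⟩
        split_ifs
        · exact lt_max_of_lt_left this
        · exact this
      · obtain rfl : m = s + l := by omega
        rw [if_pos h3]
        exact lt_max_of_lt_right h4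

theorem blk_bit (M : PACost Q A) (w : ℕ → A) (s l : ℕ) :
    (blk M w s l).2.2.2 = true ↔
      ∃ m, s ≤ m ∧ m < s + l ∧ M.Cst (M.stateAt M.qI w m) (w m) = true := by
  induction l with
  | zero =>
    constructor
    · intro h; simp [blk, info, sl] at h
    · rintro ⟨m, h1, h2, _⟩; omega
  | succ l ih =>
    rw [blk_succ]
    have hs := blk_state M w s l
    simp only [trk, hs, Bool.or_eq_true]
    constructor
    · rintro (h | h)
      · obtain ⟨m, h1, h2, h3⟩ := ih.1 h
        exact ⟨m, h1, by omega, h3⟩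
      · exact ⟨s + l, by omega, by omega, h⟩
    · rintro ⟨m, h1, h2, h3⟩
      rcases Nat.lt_or_ge m (s + l) with h | h
      · exact Or.inl (ih.2 ⟨m, h1, h, h3⟩)
      · obtain rfl : m = s + l := by omega
        exact Or.inr h3

theorem blk_pend_le (M : PACost Q A) (w : ℕ → A) (s l m : ℕ) (h1 : s ≤ m) (h2 : m < s + l)
    (h3 : ¬ Even (M.Ω (M.stateAt M.qI w m)))
    (h4 : ∀ m', m < m' → m' < s + l → Even (M.Ω (M.stateAt M.qI w m')) →
      ¬ M.Ω (M.stateAt M.qI w m) < M.Ω (M.stateAt M.qI w m')) :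
    M.Ω (M.stateAt M.qI w m) ≤ (blk M w s l).2.2.1 := by
  induction l with
  | zero => omega
  | succ l ih =>
    rw [blk_succ]
    have hs := blk_state M w s l
    simp only [trk, hs]
    rcases Nat.lt_or_ge m (s + l) with h | h
    · have := ih h (fun m' a b => h4 m' a (by omega))
      split_ifs with he hlt
      · exact absurd (lt_of_le_of_lt this hlt) (h4 (s + l) h (by omega) he)
      · exact this
      · exact le_max_of_le_left this
    · obtain rfl : m = s + l := by omega
      rw [if_neg h3]
      exact le_max_right _ _

theorem blk_pend (M : PACost Q A) (w : ℕ → A) (s l : ℕ) (h0 : (blk M w s l).2.2.1 ≠ 0) :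
    ∃ m, s ≤ m ∧ m < s + l ∧ ¬ Even (M.Ω (M.stateAt M.qI w m)) ∧
      M.Ω (M.stateAt M.qI w m) = (blk M w s l).2.2.1 ∧
      ∀ m', m < m' → m' < s + l → Even (M.Ω (M.stateAt M.qI w m')) →
      ¬ M.Ω (M.stateAt M.qI w m) < M.Ω (M.stateAt M.qI w m') := by
  induction l with
  | zero => simp [blk, info, sl] at h0
  | succ l ih =>
    rw [blk_succ] at h0 ⊢
    have hs := blk_state M w s l
    simp only [trk, hs] at h0 ⊢
    have new : ¬ Even (M.Ω (M.stateAt M.qI w (s + l))) →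
        (blk M w s l).2.2.1 ≤ M.Ω (M.stateAt M.qI w (s + l)) → _ := fun he hle =>
      (⟨s + l, by omega, by omega, he, by rw [if_neg he, max_eq_right hle],
        fun m' a b => by omega⟩ : ∃ m, s ≤ m ∧ m < s + (l + 1) ∧
          ¬ Even (M.Ω (M.stateAt M.qI w m)) ∧
          M.Ω (M.stateAt M.qI w m) = (if Even (M.Ω (M.stateAt M.qI w (s + l))) then
            (if (blk M w s l).2.2.1 < M.Ω (M.stateAt M.qI w (s + l)) then 0
              else (blk M w s l).2.2.1)
            else max (blk M w s l).2.2.1 (M.Ω (M.stateAt M.qI w (s + l)))) ∧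
          ∀ m', m < m' → m' < s + (l + 1) → Even (M.Ω (M.stateAt M.qI w m')) →
            ¬ M.Ω (M.stateAt M.qI w m) < M.Ω (M.stateAt M.qI w m'))
    by_cases he : Even (M.Ω (M.stateAt M.qI w (s + l)))
    · rw [if_pos he] at h0
      rw [if_pos he]
      split_ifs at h0 with hlt
      · exact absurd rfl h0
      · rw [if_neg hlt]
        obtain ⟨m, a1, a2, a3, a4, a5⟩ := ih h0
        refine ⟨m, a1, by omega, a3, a4, ?_⟩
        intro m' b1 b2 b3
        rcases Nat.lt_or_ge m' (s + l) with h | h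
        · exact a5 m' b1 h b3
        · obtain rfl : m' = s + l := by omega
          rw [a4]; exact hlt
    · rcases le_total (blk M w s l).2.2.1 (M.Ω (M.stateAt M.qI w (s + l))) with hle | hle
      · exact new he hle
      · by_cases hz : (blk M w s l).2.2.1 = 0
        · exact new he (by omega)
        · obtain ⟨m, a1, a2, a3, a4, a5⟩ := ih hz
          refine ⟨m, a1, by omega, a3, ?_, ?_⟩
          · rw [if_neg he, max_eq_left hle, a4]
          · intro m' b1 b2 b3
            rcases Nat.lt_or_ge m' (s + l) with h | h
            · exact a5 m' b1 h b3
            · obtain rfl : m' = s + l := by omega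
              exact absurd b3 he

/-! ### Transfer of acceptance -/

theorem accepting_iff (M : PACost Q A) (q : Q) (w : ℕ → A) :
    M.Accepting q w ↔ ∃ b N : ℕ, ∀ n, N ≤ n → M.Cor q w n ≤ b := by
  unfold PACost.Accepting
  constructor
  · intro h
    obtain ⟨m, hm⟩ := ENat.ne_top_iff_exists.1 h.ne
    have h1 : Filter.limsup (fun n => M.Cor q w n) Filter.atTop < ((m + 1 : ℕ) : ℕ∞) := by
      rw [← hm]; exact_mod_cast Nat.lt_succ_self m
    have h2 := Filter.eventually_lt_of_limsup_lt h1
    obtain ⟨N, hN⟩ := Filter.eventually_atTop.1 h2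
    exact ⟨m + 1, N, fun n hn => (hN n hn).le⟩
  · rintro ⟨b, N, h⟩
    refine lt_of_le_of_lt (Filter.limsup_le_of_le (a := (b : ℕ∞)) ?_ ?_) (ENat.natCast_lt_top b)
    · isBoundedDefault
    · exact Filter.eventually_atTop.2 ⟨N, h⟩

theorem cor_gt (M : PACost Q A) (q : Q) (w : ℕ → A) (n b : ℕ) (h : (b : ℕ∞) < M.Cor q w n) :
    ¬ Even (M.Ω (M.stateAt q w n)) ∧ ∀ n', n < n' → Even (M.Ω (M.stateAt q w n')) →
      M.Ω (M.stateAt q w n) < M.Ω (M.stateAt q w n') → b < M.segCost q w n n' := by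
  unfold PACost.Cor at h
  split_ifs at h with he
  · simp at h
  · refine ⟨he, fun n' h1 h2 h3 => ?_⟩
    have : (b : ℕ∞) < (M.segCost q w n n' : ℕ∞) :=
      lt_of_lt_of_le h (sInf_le ⟨n', h1, ⟨⟨_, rfl⟩, h3, h2⟩, rfl⟩)
    exact_mod_cast this

theorem le_cor (M : PACost Q A) (q : Q) (w : ℕ → A) (n b : ℕ)
    (he : ¬ Even (M.Ω (M.stateAt q w n)))
    (h : ∀ n', n < n' → Even (M.Ω (M.stateAt q w n')) →
      M.Ω (M.stateAt q w n) < M.Ω (M.stateAt q w n') → b ≤ M.segCost q w n n') :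
    (b : ℕ∞) ≤ M.Cor q w n := by
  unfold PACost.Cor
  rw [if_neg he]
  apply le_sInf
  rintro c ⟨n', h1, ⟨_, h3, h2⟩, rfl⟩
  exact_mod_cast h n' h1 h2 h3

theorem seg_upper (M : PACost Q A) (w : ℕ → A) (d j j' n m : ℕ) (hd : 0 < d)
    (hn : j * d ≤ n) (hm : m < (j' + 1) * d) :
    M.segCost M.qI w n m ≤
      (2 + ((Finset.Ioo j j').filter fun i => (blk M w (i * d) d).2.2.2 = true).card) * d := by
  unfold PACost.segCost
  set B := (Finset.Icc j j').filter fun i => (blk M w (i * d) d).2.2.2 = true with hB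
  have h1 : ((Finset.Ico n m).filter fun p => M.Cst (M.stateAt M.qI w p) (w p) = true) ⊆
      B.biUnion fun i => Finset.Ico (i * d) (i * d + d) := by
    intro p hp
    simp only [Finset.mem_filter, Finset.mem_Ico] at hp
    obtain ⟨⟨hp1, hp2⟩, hp3⟩ := hp
    have e1 : p / d * d ≤ p := Nat.div_mul_le_self p d
    have e2 : p < p / d * d + d := by
      have := Nat.lt_div_mul_add (a := p) hd
      omega
    simp only [Finset.mem_biUnion, Finset.mem_Ico, hB, Finset.mem_filter, Finset.mem_Icc]
    refine ⟨p / d, ⟨⟨?_, ?_⟩, ?_⟩, e1, e2⟩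
    · exact (Nat.le_div_iff_mul_le hd).2 (by omega)
    · exact Nat.lt_succ_iff.1 ((Nat.div_lt_iff_lt_mul hd).2 (by simpa using hp2.trans hm))
    · exact (blk_bit M w _ d).2 ⟨p, e1, e2, hp3⟩
  have h2 : (B.biUnion fun i => Finset.Ico (i * d) (i * d + d)).card ≤ B.card * d := by
    apply Finset.card_biUnion_le_card_mul
    intro i _
    simp
  have h3 : B ⊆ insert j (insert j'
      ((Finset.Ioo j j').filter fun i => (blk M w (i * d) d).2.2.2 = true)) := by
    intro i hi
    simp only [hB, Finset.mem_filter, Finset.mem_Icc] at hi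
    simp only [Finset.mem_insert, Finset.mem_filter, Finset.mem_Ioo]
    by_cases a : i = j
    · exact Or.inl a
    · by_cases b : i = j'
      · exact Or.inr (Or.inl b)
      · exact Or.inr (Or.inr ⟨⟨by omega, by omega⟩, hi.2⟩)
  have h4 : B.card ≤ 2 +
      ((Finset.Ioo j j').filter fun i => (blk M w (i * d) d).2.2.2 = true).card := by
    refine (Finset.card_le_card h3).trans ?_
    refine (Finset.card_insert_le _ _).trans ?_
    have := Finset.card_insert_le j'
      ((Finset.Ioo j j').filter fun i => (blk M w (i * d) d).2.2.2 = true)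
    omega
  exact ((Finset.card_le_card h1).trans h2).trans (Nat.mul_le_mul_right d h4)

theorem seg_lower (M : PACost Q A) (w : ℕ → A) (N : ℕ → ℕ) (hN : StrictMono N) (j j' n m : ℕ)
    (hn : n < N (j + 1)) (hm : N j' ≤ m) :
    ((Finset.Ioo j j').filter fun i =>
      (blk M w (N i) (N (i + 1) - N i)).2.2.2 = true).card ≤ M.segCost M.qI w n m := by
  unfold PACost.segCost
  have h : ∀ i, ∃ p, (blk M w (N i) (N (i + 1) - N i)).2.2.2 = true →
      N i ≤ p ∧ p < N (i + 1) ∧ M.Cst (M.stateAt M.qI w p) (w p) = true := by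
    intro i
    by_cases hb : (blk M w (N i) (N (i + 1) - N i)).2.2.2 = true
    · obtain ⟨p, h1, h2, h3⟩ := (blk_bit M w _ _).1 hb
      exact ⟨p, fun _ => ⟨h1, by omega, h3⟩⟩
    · exact ⟨0, fun h => absurd h hb⟩
  choose p hp using h
  apply Finset.card_le_card_of_injOn p
  · intro i hi
    simp only [Finset.coe_filter, Finset.mem_Ioo, Set.mem_ofPred_eq] at hi
    obtain ⟨h1, h2, h3⟩ := hp i hi.2
    simp only [Finset.coe_filter, Finset.mem_Ico, Set.mem_ofPred_eq]
    have e1 : N (j + 1) ≤ N i := hN.monotone hi.1.1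
    have e2 : N (i + 1) ≤ N j' := hN.monotone hi.1.2
    exact ⟨⟨by omega, by omega⟩, h3⟩
  · intro i hi i' hi' he
    simp only [Finset.coe_filter, Finset.mem_Ioo, Set.mem_ofPred_eq] at hi hi'
    obtain ⟨h1, h2, _⟩ := hp i hi.2
    obtain ⟨h1', h2', _⟩ := hp i' hi'.2
    rcases lt_trichotomy i i' with h | h | h
    · have : N (i + 1) ≤ N i' := hN.monotone h
      omega
    · exact h
    · have : N (i' + 1) ≤ N i := hN.monotone h
      omega

theorem exists_block (N : ℕ → ℕ) (h0 : N 0 = 0) (hN : StrictMono N) (m : ℕ) :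
    ∃ j, N j ≤ m ∧ m < N (j + 1) := by
  induction m with
  | zero => exact ⟨0, by omega, by have := hN (show 0 < 0 + 1 by omega); omega⟩
  | succ m ih =>
    obtain ⟨j, h1, h2⟩ := ih
    by_cases h : m + 1 < N (j + 1)
    · exact ⟨j, by omega, h⟩
    · have := hN (Nat.lt_succ_self (j + 1))
      exact ⟨j + 1, by omega, by simp only [Nat.succ_eq_add_one] at this; omega⟩

theorem transfer (M : PACost Q A) (w w' : ℕ → A) (d : ℕ) (hd : 0 < d) (N : ℕ → ℕ) (h0 : N 0 = 0)
    (hN : StrictMono N) (hb : ∀ j, blk M w (j * d) d = blk M w' (N j) (N (j + 1) - N j))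
    (hw : w ∉ M.Lang) : w' ∉ M.Lang := by
  intro hw'
  apply hw
  change M.Accepting M.qI w' at hw'
  change M.Accepting M.qI w
  rw [accepting_iff] at hw' ⊢
  obtain ⟨b, K, hbK⟩ := hw'
  refine ⟨(b + 3) * d, K * d, ?_⟩
  intro n hn
  by_contra hcon
  rw [not_le] at hcon
  obtain ⟨hodd, hans⟩ := cor_gt M M.qI w n _ hcon
  set j := n / d with hj
  have e1 : j * d ≤ n := Nat.div_mul_le_self n d
  have e2 : n < j * d + d := by
    have := Nat.lt_div_mul_add (a := n) hd
    omega
  have hKj : K ≤ j := (Nat.le_div_iff_mul_le hd).2 hn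
  have hlate : ∀ m, n < m → Even (M.Ω (M.stateAt M.qI w m)) →
      M.Ω (M.stateAt M.qI w n) < M.Ω (M.stateAt M.qI w m) → ∀ j', m < (j' + 1) * d →
      b + 1 < ((Finset.Ioo j j').filter fun i => (blk M w (i * d) d).2.2.2 = true).card := by
    intro m h1 h2 h3 j' hj'
    have a1 := hans m h1 h2 h3
    have a2 := seg_upper M w d j j' n m hd e1 hj'
    have a3 := Nat.lt_of_mul_lt_mul_right (lt_of_lt_of_le a1 a2)
    omega
  have hpend := blk_pend_le M w (j * d) d n e1 e2 hodd (by
    intro m h1 h2 h3 h4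
    have := hlate m h1 h3 h4 j (by rw [Nat.succ_mul]; exact h2)
    simp at this)
  have hne : (blk M w' (N j) (N (j + 1) - N j)).2.2.1 ≠ 0 := by
    rw [← hb]
    intro hz
    rw [hz] at hpend
    apply hodd
    rw [Nat.le_zero.1 hpend]
    exact Even.zero
  obtain ⟨n', a1, a2, a3, a4, a5⟩ := blk_pend M w' _ _ hne
  have hNj : N j < N (j + 1) := hN (Nat.lt_succ_self j)
  have a2' : n' < N (j + 1) := by omega
  have hle : M.Ω (M.stateAt M.qI w n) ≤ M.Ω (M.stateAt M.qI w' n') := by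
    rw [a4, ← hb]; exact hpend
  have hfin : ((b + 1 : ℕ) : ℕ∞) ≤ M.Cor M.qI w' n' := by
    apply le_cor _ _ _ _ _ a3
    intro m' c1 c2 c3
    have hm' : N (j + 1) ≤ m' := by
      by_contra hlt
      exact a5 m' c1 (by omega) c2 c3
    obtain ⟨j', d1, d2⟩ := exists_block N h0 hN m'
    have hjj' : j < j' := by
      by_contra hlt
      have : N (j' + 1) ≤ N (j + 1) := hN.monotone (by omega)
      omega
    have hev : M.Ω (M.stateAt M.qI w n) < (blk M w (j' * d) d).2.1 := by
      rw [hb, blk_even]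
      exact ⟨m', d1, by omega, c2, by omega⟩
    obtain ⟨m, f1, f2, f3, f4⟩ := (blk_even M w _ _ _).1 hev
    have hnm : n < m := by
      have : (j + 1) * d ≤ j' * d := Nat.mul_le_mul_right d hjj'
      rw [Nat.succ_mul] at this
      omega
    have g1 := hlate m hnm f3 f4 j' (by rw [Nat.succ_mul]; exact f2)
    have g2 := seg_lower M w' N hN j j' n' m' a2' d1
    simp only [hb] at g1
    omega
  have hK : K ≤ n' := hKj.trans ((hN.id_le j).trans a1)
  have := hfin.trans (hbK n' hK)
  have : b + 1 ≤ b := by exact_mod_cast this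
  omega

/-! ### Pumping -/

/-- The summary of a word over the alphabet of Player I. -/
def summ (M : PACost Q (I × O)) (x : List I) : Set (Q × Q × ℕ × ℕ × Bool) :=
  { p | ∃ y : List O, y.length = x.length ∧ info M p.1 (x.zip y) = p.2 }

theorem summ_append (M : PACost Q (I × O)) (x x' z : List I) (h : summ M x ⊆ summ M x') :
    summ M (x ++ z) ⊆ summ M (x' ++ z) := by
  rintro ⟨q, t⟩ ⟨y, hy, ht⟩
  have hy' : y = y.take x.length ++ y.drop x.length := (List.take_append_drop _ _).symm
  rw [List.length_append] at hy
  have hl : (y.take x.length).length = x.length := by simp; omega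
  have h1 : (q, info M q (x.zip (y.take x.length))) ∈ summ M x := ⟨_, hl, rfl⟩
  obtain ⟨y1, hy1, ht1⟩ := h h1
  refine ⟨y1 ++ y.drop x.length, by simp; omega, ?_⟩
  simp only at ht ht1 ⊢
  rw [hy', List.zip_append hl.symm] at ht
  rw [List.zip_append hy1.symm, ← ht]
  unfold info at ht1 ⊢
  rw [List.foldl_append, List.foldl_append, ht1]

/-- The finite set of possible tracking states. -/
def trkSet [Fintype Q] (M : PACost Q A) : Finset (Q × ℕ × ℕ × Bool) :=
  Finset.univ ×ˢ insert 0 ((Finset.univ.image M.Ω).filter fun c => Even c) ×ˢ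
    insert 0 ((Finset.univ.image M.Ω).filter fun c => ¬ Even c) ×ˢ Finset.univ

theorem info_mem [Fintype Q] (M : PACost Q A) (q : Q) (x : List A) : info M q x ∈ trkSet M := by
  induction x using List.reverseRecOn with
  | nil => simp [info, trkSet]
  | append_singleton x a ih =>
    have : info M q (x ++ [a]) = trk M (info M q x) a := by simp [info]
    rw [this]
    simp only [trkSet, Finset.mem_product, Finset.mem_univ, true_and, and_true] at ih ⊢
    obtain ⟨i1, i2⟩ := ih
    have hmem : M.Ω (info M q x).1 ∈ Finset.univ.image M.Ω :=
      Finset.mem_image_of_mem _ (Finset.mem_univ _)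
    simp only [trk]
    constructor
    · split_ifs with he
      · rcases max_choice (info M q x).2.1 (M.Ω (info M q x).1) with h | h <;> rw [h]
        · exact i1
        · exact Finset.mem_insert_of_mem (Finset.mem_filter.2 ⟨hmem, he⟩)
      · exact i1
    · split_ifs with he hl
      · exact Finset.mem_insert_self _ _
      · exact i2
      · rcases max_choice (info M q x).2.2.1 (M.Ω (info M q x).1) with h | h <;> rw [h]
        · exact i2
        · exact Finset.mem_insert_of_mem (Finset.mem_filter.2 ⟨hmem, he⟩)

theorem trkSet_card [Fintype Q] (M : PACost Q A) (n k : ℕ)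
    (hn : Fintype.card Q = n) (hk : (Finset.univ.image M.Ω).card = k)
    (he : ∃ q, Even (M.Ω q)) (ho : ∃ q, Odd (M.Ω q)) : (trkSet M).card ≤ n * (k * (k * 2)) := by
  have hsum := Finset.card_filter_add_card_filter_not (s := Finset.univ.image M.Ω)
    (fun c => Even c)
  rw [hk] at hsum
  have h1 : 0 < ((Finset.univ.image M.Ω).filter fun c => Even c).card := by
    obtain ⟨q, hq⟩ := he
    exact Finset.card_pos.2 ⟨M.Ω q, Finset.mem_filter.2
      ⟨Finset.mem_image_of_mem _ (Finset.mem_univ _), hq⟩⟩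
  have h2 : 0 < ((Finset.univ.image M.Ω).filter fun c => ¬ Even c).card := by
    obtain ⟨q, hq⟩ := ho
    exact Finset.card_pos.2 ⟨M.Ω q, Finset.mem_filter.2
      ⟨Finset.mem_image_of_mem _ (Finset.mem_univ _), Nat.not_even_iff_odd.2 hq⟩⟩
  unfold trkSet
  rw [Finset.card_product, Finset.card_product, Finset.card_product, Finset.card_univ,
    Finset.card_univ, hn, Fintype.card_bool]
  have h3 := Finset.card_insert_le 0 ((Finset.univ.image M.Ω).filter fun c => Even c)
  have h4 := Finset.card_insert_le 0 ((Finset.univ.image M.Ω).filter fun c => ¬ Even c)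
  exact Nat.mul_le_mul_left _ (Nat.mul_le_mul (by omega) (Nat.mul_le_mul_right _ (by omega)))

theorem pump_one [Fintype Q] (M : PACost Q (I × O)) (d : ℕ)
    (hd : 2 ^ (Fintype.card Q * (trkSet M).card) ≤ d) (x : List I) (hx : d ≤ x.length) :
    ∃ x', x.length < x'.length ∧ summ M x' = summ M x := by
  set S : Finset (Q × Q × ℕ × ℕ × Bool) := Finset.univ ×ˢ trkSet M with hS
  have hsub : ∀ z : List I, summ M z ⊆ (S : Set _) := by
    rintro z ⟨q, t⟩ ⟨y, _, ht⟩
    simp only at ht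
    simp only [hS, Finset.coe_product, Set.mem_prod, Finset.coe_univ, Set.mem_univ, true_and]
    rw [← ht]
    exact info_mem M _ _
  let g : ℕ → Finset (Q × Q × ℕ × ℕ × Bool) := fun i => S.filter fun p => p ∈ summ M (x.take i)
  have hg : ∀ i, (g i : Set _) = summ M (x.take i) := by
    intro i
    ext p
    simp only [g, Finset.coe_filter, Set.mem_ofPred_eq]
    exact ⟨fun h => h.2, fun h => ⟨hsub _ h, h⟩⟩
  have hcard : S.powerset.card < (Finset.range (d + 1)).card := by
    rw [Finset.card_powerset, Finset.card_range, hS, Finset.card_product, Finset.card_univ]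
    omega
  obtain ⟨i, hi, j, hj, hij, hgij⟩ := Finset.exists_ne_map_eq_of_card_lt_of_maps_to hcard
    (f := g) (fun i _ => Finset.mem_powerset.2 (Finset.filter_subset _ _))
  wlog hlt : i < j generalizing i j
  · exact this j hj i hi hij.symm hgij.symm (by omega)
  have hj' := Finset.mem_range.1 hj
  have hsum : summ M (x.take i) = summ M (x.take j) := by rw [← hg, ← hg, hgij]
  refine ⟨x.take j ++ x.drop i, by simp; omega, ?_⟩
  conv_rhs => rw [← List.take_append_drop i x]
  exact Set.Subset.antisymm (summ_append M _ _ _ hsum.symm.subset)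
    (summ_append M _ _ _ hsum.subset)

theorem pump [Fintype Q] (M : PACost Q (I × O)) (d : ℕ)
    (hd : 2 ^ (Fintype.card Q * (trkSet M).card) ≤ d) (x : List I) (hx : d ≤ x.length) (ℓ : ℕ) :
    ∃ x', ℓ ≤ x'.length ∧ d ≤ x'.length ∧ summ M x' = summ M x := by
  induction ℓ with
  | zero => exact ⟨x, by omega, hx, rfl⟩
  | succ ℓ ih =>
    obtain ⟨x', h1, h2, h3⟩ := ih
    obtain ⟨x'', h4, h5⟩ := pump_one M d hd x' h2
    exact ⟨x'', by omega, by omega, h5.trans h3⟩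

theorem pump_skolem [Fintype Q] (M : PACost Q (I × O)) (d : ℕ)
    (hd : 2 ^ (Fintype.card Q * (trkSet M).card) ≤ d) :
    ∃ (pm : List I → ℕ → List I) (mt : Q → List I → List I → List O → List O),
      (∀ x ℓ, x.length = d → ℓ ≤ (pm x ℓ).length) ∧
      (∀ x ℓ q y', x.length = d → y'.length = (pm x ℓ).length →
        (mt q x (pm x ℓ) y').length = d ∧
        info M q (x.zip (mt q x (pm x ℓ) y')) = info M q ((pm x ℓ).zip y')) := by
  have h1 : ∀ x : List I, ∀ ℓ : ℕ, ∃ x' : List I,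
      x.length = d → ℓ ≤ x'.length ∧ summ M x' = summ M x := by
    intro x ℓ
    by_cases hx : x.length = d
    · obtain ⟨x', a, _, b⟩ := pump M d hd x hx.ge ℓ
      exact ⟨x', fun _ => ⟨a, b⟩⟩
    · exact ⟨[], fun h => absurd h hx⟩
  choose pm hpm using h1
  have h2 : ∀ (q : Q) (x x' : List I) (y' : List O), ∃ y : List O,
      x.length = d → summ M x' = summ M x → y'.length = x'.length →
      y.length = d ∧ info M q (x.zip y) = info M q (x'.zip y') := by
    intro q x x' y'
    by_cases h : x.length = d ∧ summ M x' = summ M x ∧ y'.length = x'.length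
    · obtain ⟨a, b, c⟩ := h
      have : (q, info M q (x'.zip y')) ∈ summ M x' := ⟨y', c, rfl⟩
      rw [b] at this
      obtain ⟨y, e1, e2⟩ := this
      exact ⟨y, fun _ _ _ => ⟨e1.trans a, e2⟩⟩
    · exact ⟨[], fun a b c => absurd ⟨a, b, c⟩ h⟩
  choose mt hmt using h2
  exact ⟨pm, mt, fun x ℓ hx => (hpm x ℓ hx).1,
    fun x ℓ q y' hx hy => hmt q x _ y' hx (hpm x ℓ hx).2 hy⟩

/-! ### The simulation -/

/-- The stages of the simulation: simulated moves of Player O, letters of completed blocks,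
and the current block. -/
def stg [Inhabited O] (M : PACost Q (I × O)) (d : ℕ) (F : ℕ → ℕ) (pm : List I → ℕ → List I)
    (mt : Q → List I → List I → List O → List O) (G : (ℕ → O) → (ℕ → I)) (β : ℕ → O) :
    ℕ → List O × List I × List I
  | 0 => ([], [], pm (sl (G (extW [])) 0 d) 1)
  | j + 1 =>
    ((stg M d F pm mt G β j).1 ++
      mt (M.stateAt M.qI (fun m => (G (extW (stg M d F pm mt G β j).1) m,
          extW (stg M d F pm mt G β j).1 m)) (stg M d F pm mt G β j).1.length)
        (sl (G (extW (stg M d F pm mt G β j).1)) (stg M d F pm mt G β j).1.length d)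
        (stg M d F pm mt G β j).2.2
        (sl β (stg M d F pm mt G β j).2.1.length (stg M d F pm mt G β j).2.2.length),
     (stg M d F pm mt G β j).2.1 ++ (stg M d F pm mt G β j).2.2,
     pm (sl (G (extW (stg M d F pm mt G β j).1)) ((stg M d F pm mt G β j).1.length + d) d)
      (F ((stg M d F pm mt G β j).2.1.length + (stg M d F pm mt G β j).2.2.length)))

theorem extW_append [Inhabited O] (y z : List O) (m : ℕ) (h : m < y.length) :
    extW (y ++ z) m = extW y m := by
  unfold extW
  rw [List.getD_append _ _ _ _ h]

theorem stateAt_congr (M : PACost Q A) (w w' : ℕ → A) (n : ℕ) (h : ∀ m, m < n → w m = w' m) :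
    M.stateAt M.qI w n = M.stateAt M.qI w' n := by
  induction n with
  | zero => rfl
  | succ n ih =>
    simp only [PACost.stateAt]
    rw [ih (fun m hm => h m (by omega)), h n (by omega)]

theorem simulate [Inhabited I] [Inhabited O] (M : PACost Q (I × O)) (d : ℕ) (hd : 0 < d)
    (pm : List I → ℕ → List I) (mt : Q → List I → List I → List O → List O)
    (hpm : ∀ x ℓ, x.length = d → ℓ ≤ (pm x ℓ).length)
    (hmt : ∀ x ℓ q y', x.length = d → y'.length = (pm x ℓ).length →
        (mt q x (pm x ℓ) y').length = d ∧
        info M q (x.zip (mt q x (pm x ℓ) y')) = info M q ((pm x ℓ).zip y'))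
    (g : ℕ → ℕ) (hg : ∀ i, ∑ l ∈ Finset.range (i + 1), g l = 2 * d + i)
    (G : (ℕ → O) → (ℕ → I)) (hG : Causal g G) (hw : ∀ β, (fun n => (G β n, β n)) ∉ M.Lang)
    (f : ℕ → ℕ) (hf : DelayFn f) : IWins f M.Lang := by
  set F : ℕ → ℕ := fun i => ∑ l ∈ Finset.range (i + 1), f l with hF
  have hFpos : ∀ i, 1 ≤ F i := fun i => le_trans (by omega) (le_sum_delay hf (i + 1))
  have hFmono : ∀ i j, i ≤ j → F i ≤ F j := fun i j hij =>
    Finset.sum_le_sum_of_subset (Finset.range_mono (by omega))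
  set S := stg M d F pm mt G with hS
  have sY : ∀ β j, (S β (j + 1)).1 = (S β j).1 ++
      mt (M.stateAt M.qI (fun m => (G (extW (S β j).1) m, extW (S β j).1 m)) (S β j).1.length)
        (sl (G (extW (S β j).1)) (S β j).1.length d) (S β j).2.2
        (sl β (S β j).2.1.length (S β j).2.2.length) := fun β j => rfl
  have sP : ∀ β j, (S β (j + 1)).2.1 = (S β j).2.1 ++ (S β j).2.2 := fun β j => rfl
  have sN : ∀ β j, (S β (j + 1)).2.2 =
      pm (sl (G (extW (S β j).1)) ((S β j).1.length + d) d)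
      (F ((S β j).2.1.length + (S β j).2.2.length)) := fun β j => rfl
  have inv : ∀ β j, (S β j).1.length = j * d ∧
      ∃ ℓ, 1 ≤ ℓ ∧ (S β j).2.2 = pm (sl (G (extW (S β j).1)) (j * d) d) ℓ := by
    intro β j
    induction j with
    | zero => exact ⟨by simp [hS, stg], 1, le_rfl, by simp [hS, stg]⟩
    | succ j ih =>
      obtain ⟨h1, ℓ, hℓ, h2⟩ := ih
      have h3 : (S β (j + 1)).1.length = (j + 1) * d := by
        rw [sY, List.length_append, h1, h2]
        rw [(hmt _ ℓ _ _ (sl_length _ _ _) (sl_length _ _ _)).1, Nat.succ_mul]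
      refine ⟨h3, F ((S β j).2.1.length + (S β j).2.2.length), hFpos _, ?_⟩
      rw [sN]
      congr 1
      rw [h1, ← Nat.succ_mul]
      apply sl_congr
      intro m _ hm
      apply hG _ _ (j * d)
      · intro m hm
        rw [sY, extW_append _ _ _ (by omega)]
      · rw [hg]
        rw [Nat.succ_mul] at hm
        omega
  have hNpos : ∀ β j, 1 ≤ (S β j).2.2.length := by
    intro β j
    obtain ⟨_, ℓ, hℓ, h⟩ := inv β j
    rw [h]
    exact hℓ.trans (hpm _ _ (sl_length _ _ _))
  have hlenS : ∀ β j, (S β (j + 1)).2.1.length = (S β j).2.1.length + (S β j).2.2.length := by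
    intro β j
    rw [sP, List.length_append]
  have hmono : ∀ β, StrictMono fun j => (S β j).2.1.length := fun β =>
    strictMono_nat_of_lt_succ fun j => by
      have h1 := hlenS β j
      have h2 := hNpos β j
      omega
  have hlim : ∀ β, ∃ a : ℕ → I, (∀ j, (S β j).2.1 = sl a 0 (S β j).2.1.length) ∧
      ∀ m, a m = extW (S β (m + 1)).2.1 m := fun β =>
    chain_limit (fun j => (S β j).2.1) (fun j => ⟨_, (sP β j).symm⟩) (fun j => (hmono β).id_le j)
  choose G' hG' _ using hlim
  apply IWins_of_causal hf G'
  · intro β β' i hβ m hm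
    have hst : ∀ j, (S β j).2.1.length ≤ i → S β j = S β' j := by
      intro j
      induction j with
      | zero => intro _; rfl
      | succ j ih =>
        intro hj
        have h1 := hlenS β j
        have h2 := ih (by omega)
        have h3 : sl β (S β j).2.1.length (S β j).2.2.length =
            sl β' (S β j).2.1.length (S β j).2.2.length :=
          sl_congr fun m _ hm => hβ m (by omega)
        refine Prod.ext ?_ (Prod.ext ?_ ?_)
        · rw [sY, sY, h3, h2]
        · rw [sP, sP, h2]
        · rw [sN, sN, h2]
    obtain ⟨j, e1, e2⟩ := exists_block (fun j => (S β j).2.1.length) rfl (hmono β) i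
    have hj := hst j e1
    have hP : (S β (j + 2)).2.1 = (S β' (j + 2)).2.1 := by
      rw [sP, sP, sP, sP, sN, sN, hj]
    have hlen : F i ≤ (S β (j + 2)).2.1.length := by
      have h1 : (S β (j + 2)).2.1.length = _ := hlenS β (j + 1)
      have h2 : F ((S β j).2.1.length + (S β j).2.2.length) ≤ (S β (j + 1)).2.2.length := by
        rw [sN]
        exact hpm _ _ (sl_length _ _ _)
      rw [← hlenS] at h2
      have h3 := hFmono i _ e2.le
      omega
    have hm' : m < (S β (j + 2)).2.1.length := lt_of_lt_of_le hm hlen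
    have h1 := extW_sl (G' β) _ m hm'
    rw [← hG' β (j + 2)] at h1
    have h2 := extW_sl (G' β') (S β' (j + 2)).2.1.length m (by rw [← hP]; exact hm')
    rw [← hG' β' (j + 2)] at h2
    rw [← h1, ← h2, hP]
  · intro β
    obtain ⟨γ, hγ, _⟩ := chain_limit (fun j => (S β j).1) (fun j => ⟨_, (sY β j).symm⟩)
      (fun j => by rw [(inv β j).1]; exact Nat.le_mul_of_pos_right j hd)
    have hY : ∀ j, (S β j).1 = sl γ 0 (j * d) := by
      intro j
      have := hγ j
      rwa [(inv β j).1] at this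
    have hext : ∀ j m, m < j * d → extW (S β j).1 m = γ m := by
      intro j m hm
      rw [hY]
      exact extW_sl γ _ m hm
    have hGext : ∀ j m, m < j * d + d → G (extW (S β j).1) m = G γ m := by
      intro j m hm
      apply hG _ _ (j * d) (hext j)
      rw [hg]
      omega
    set N : ℕ → ℕ := fun j => (S β j).2.1.length with hN
    have hNs : ∀ j, N (j + 1) - N j = (S β j).2.2.length := by
      intro j
      have := hlenS β j
      simp only [hN]
      omega
    have hcur : ∀ j, (S β j).2.2 = sl (G' β) (N j) (N (j + 1) - N j) := by
      intro j
      have h1 := hG' β (j + 1)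
      have h2 := hlenS β j
      rw [h2, sl_add, zero_add, ← hG' β j, sP] at h1
      rw [hNs]
      exact List.append_cancel_left h1
    have hx : ∀ j, sl (G (extW (S β j).1)) (S β j).1.length d = sl (G γ) (j * d) d := by
      intro j
      rw [(inv β j).1]
      exact sl_congr fun m _ hm => hGext j m hm
    have hq : ∀ j, M.stateAt M.qI (fun m => (G (extW (S β j).1) m, extW (S β j).1 m))
        (S β j).1.length = M.stateAt M.qI (fun m => (G γ m, γ m)) (j * d) := by
      intro j
      rw [(inv β j).1]
      apply stateAt_congr
      intro m hm
      rw [hGext j m (by omega), hext j m hm]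
    have hy : ∀ j, sl γ (j * d) d = mt (M.stateAt M.qI (fun m => (G γ m, γ m)) (j * d))
        (sl (G γ) (j * d) d) (S β j).2.2 (sl β (N j) (S β j).2.2.length) := by
      intro j
      have h1 := sY β j
      rw [hx, hq, hY (j + 1), Nat.succ_mul, sl_add, zero_add, ← hY j] at h1
      exact List.append_cancel_left h1
    have hinfo : ∀ j, info M (M.stateAt M.qI (fun m => (G γ m, γ m)) (j * d))
          (sl (fun m => (G γ m, γ m)) (j * d) d) =
        info M (M.stateAt M.qI (fun m => (G γ m, γ m)) (j * d))
          (sl (fun m => (G' β m, β m)) (N j) (N (j + 1) - N j)) := by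
      intro j
      obtain ⟨h1, ℓ, _, h2⟩ := inv β j
      rw [← h1, hx] at h2
      have h3 := (hmt (sl (G γ) (j * d) d) ℓ
        (M.stateAt M.qI (fun m => (G γ m, γ m)) (j * d)) (sl β (N j) (S β j).2.2.length)
        (sl_length _ _ _) (by rw [sl_length, h2])).2
      rw [← h2, ← hy, sl_zip] at h3
      rw [h3]
      conv_lhs => rw [← hNs, hcur, sl_zip]
    have hstate : ∀ j, M.stateAt M.qI (fun m => (G γ m, γ m)) (j * d) =
        M.stateAt M.qI (fun m => (G' β m, β m)) (N j) := by
      intro j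
      induction j with
      | zero => rw [Nat.zero_mul]; rfl
      | succ j ih =>
        have h1 := blk_state M (fun m => (G γ m, γ m)) (j * d) d
        have h2 := blk_state M (fun m => (G' β m, β m)) (N j) (N (j + 1) - N j)
        have h3 := hinfo j
        have h4 : N j ≤ N (j + 1) := (hmono β).monotone (Nat.le_succ j)
        rw [Nat.succ_mul, ← h1, blk, h3, ih]
        rw [blk] at h2
        rw [h2]
        congr 1
        omega
    refine transfer M (fun m => (G γ m, γ m)) _ d hd N rfl (hmono β) ?_ (hw γ)
    intro j
    unfold blk
    rw [hinfo, hstate]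

end Aux

/-- Theorem 1, constant lookahead suffices. For a parity automaton with
costs with `n` states and `k` colors (both parities occurring among the colors), Player I
wins the delay game with the constant delay function with `f 0 = 2^(2n⁴k²+1)` iff he wins it
for every delay function. -/
theorem statement4 {Q I O : Type} [Fintype Q] [Fintype I] [Fintype O] [Inhabited I]
    (M : PACost Q (I × O)) (n k : ℕ)
    (hn : Fintype.card Q = n) (hk : (Finset.univ.image M.Ω).card = k)
    (he : ∃ q, Even (M.Ω q)) (ho : ∃ q, Odd (M.Ω q)) :
    IWins (fun i => if i = 0 then 2 ^ (2 * n ^ 4 * k ^ 2 + 1) else 1) M.Lang ↔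
      ∀ f : ℕ → ℕ, DelayFn f → IWins f M.Lang := by
  have hpos : DelayFn (fun i => if i = 0 then 2 ^ (2 * n ^ 4 * k ^ 2 + 1) else 1) := by
    intro i
    simp only
    split_ifs <;> positivity
  constructor
  · intro h f hf
    rcases isEmpty_or_nonempty O with hO | ⟨⟨o⟩⟩
    · exact ⟨fun v => List.replicate (f v.length) default, fun v => by simp,
        fun u v => (hO.false (v 0)).elim⟩
    · have : Inhabited O := ⟨o⟩
      have hn1 : 1 ≤ n := by
        rw [← hn]
        exact Fintype.card_pos_iff.2 ⟨M.qI⟩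
      have hcard : 2 ^ (Fintype.card Q * (trkSet M).card) ≤ 2 ^ (2 * n ^ 4 * k ^ 2) := by
        apply Nat.pow_le_pow_right (by norm_num)
        rw [hn]
        calc n * (trkSet M).card ≤ n * (n * (k * (k * 2))) :=
              Nat.mul_le_mul_left _ (trkSet_card M n k hn hk he ho)
          _ = 2 * n ^ 2 * k ^ 2 := by ring
          _ ≤ 2 * n ^ 4 * k ^ 2 := by
              gcongr
              norm_num
      obtain ⟨pm, mt, h1, h2⟩ := pump_skolem M _ hcard
      obtain ⟨G, hG, hw⟩ := causal_of_IWins hpos h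
      refine simulate M _ (by positivity) pm mt h1 h2 _ ?_ G hG hw f hf
      intro i
      rw [Finset.sum_range_succ']
      simp [pow_succ]
      ring
  · intro h
    exact h _ hpos
end
end

section
/- Let A be a parity automaton with costs over Σ_I × Σ_O with n states and k colors, where Ω(Q) contains both an even and an odd color, let d = 2^{2n⁴k²}, and fix for each type t realized by some run of A a representative run ρ_t of type t. Then Player O wins the abstract game G(A) if, and only if, Player O wins the delay game Γ_f(L(A)) for some delay function f. -/
attribute [local instance] Classical.propDecidable

noncomputable section

namespace PACost

/-- Types of runs: `(first state, last state, max even color, max unanswered odd color,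
increment occurred)`. -/
abbrev RType (Q : Type) := Q × Q × WithBot ℕ × WithBot ℕ × Bool

variable {Q A : Type}

/-- The type of the non-empty finite run of `M` starting in `q` processing `l`. -/
def runType (M : PACost Q A) (q : Q) (l : List A) : RType Q :=
  let sts := List.scanl M.δ q l
  let st : ℕ → Q := fun j => sts.getD j q
  ( q,
    l.foldl M.δ q,
    ((Finset.range sts.length).filter fun j => Even (M.Ω (st j))).sup
      (fun j => (M.Ω (st j) : WithBot ℕ)),
    ((Finset.range sts.length).filter fun j =>
        Odd (M.Ω (st j)) ∧ ∀ j' < sts.length, j < j' →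
          ¬(Even (M.Ω (st j')) ∧ M.Ω (st j) < M.Ω (st j'))).sup
      (fun j => (M.Ω (st j) : WithBot ℕ)),
    (sts.zip l).any fun p => M.Cst p.1 p.2 )

/-- The type of the empty run prefix starting in `q`. -/
def InitT (M : PACost Q A) (q : Q) : RType Q :=
  ( q, q,
    if Even (M.Ω q) then (M.Ω q : WithBot ℕ) else ⊥,
    if Odd (M.Ω q) then (M.Ω q : WithBot ℕ) else ⊥,
    false )

/-- The type-update function. -/
def UpdT (M : PACost Q A) (t : RType Q) (a : A) : RType Q :=
  match t with
  | (q0, q1, c0, c1, ℓ) =>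
    let q1' := M.δ q1 a
    ( q0, q1',
      if Even (M.Ω q1') then max c0 ((M.Ω q1' : WithBot ℕ)) else c0,
      if Odd (M.Ω q1') then max c1 ((M.Ω q1' : WithBot ℕ))
      else if ∃ c : ℕ, c1 = (c : WithBot ℕ) ∧ M.Ω q1' ∈ M.Ans c then ⊥
      else c1,
      ℓ || M.Cst q1 a )

end PACost

namespace PACost

variable {Q I O : Type}

/-- One step of the powerset transition function obtained from `M` by tracking types and
projecting away the `O`-component of the alphabet. -/
def dP (M : PACost Q (I × O)) (S : Set (Q × RType Q)) (a : I) : Set (Q × RType Q) :=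
  { x | ∃ qt ∈ S, ∃ b : O, x = (M.δ qt.1 (a, b), UpdT M qt.2 (a, b)) }

/-- The extension `δ_P^+` of the powerset transition function to words
(with `dPPlus M S [] = S`). -/
def dPPlus (M : PACost Q (I × O)) (S : Set (Q × RType Q)) (l : List I) : Set (Q × RType Q) :=
  l.foldl (dP M) S

/-- The function `r_x` associated with the word `x`. -/
def rfun (M : PACost Q (I × O)) (x : List I) : Q → Set (Q × RType Q) :=
  fun q => dPPlus M {(q, InitT M q)} x

/-- The set `T_A` of types of `M`: tuples whose color entries are colors of `M` or `⊥`. -/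
def TypeSet (M : PACost Q (I × O)) : Set (RType Q) :=
  { t | (t.2.2.1 = ⊥ ∨ ∃ q, (M.Ω q : WithBot ℕ) = t.2.2.1) ∧
        (t.2.2.2.1 = ⊥ ∨ ∃ q, (M.Ω q : WithBot ℕ) = t.2.2.2.1) }

/-- The set `ℛ` of equivalence classes of `≡_A` on words of length `2d`, where each class is
represented by its (class-independent) function `r_S : Q → 2^{Q'}`. -/
def Rcls (M : PACost Q (I × O)) (d : ℕ) : Set (Q → Set (Q × RType Q)) :=
  { r | ∃ x : List I, x.length = 2 * d ∧ r = rfun M x }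

end PACost

namespace PACost

variable {Q I O : Type}

/-- The history of the play in the abstract game `𝒢(A)` in which Player I's moves are given
by `S` and Player O moves according to the strategy `σ` (her move in round `0` is forced). -/
def gHist (M : PACost Q (I × O))
    (σ : List ((Q → Set (Q × RType Q)) × (Q × RType Q)) → (Q → Set (Q × RType Q)) → Q × RType Q)
    (S : ℕ → Q → Set (Q × RType Q)) : ℕ → List ((Q → Set (Q × RType Q)) × (Q × RType Q))
  | 0 => [(S 0, (M.qI, InitT M M.qI))]
  | i + 1 => gHist M σ S i ++ [(S (i + 1), σ (gHist M σ S i) (S (i + 1)))]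

/-- The pair `(q_i, t_i)` picked by Player O in round `i` of the abstract game. -/
def gQT (M : PACost Q (I × O))
    (σ : List ((Q → Set (Q × RType Q)) × (Q × RType Q)) → (Q → Set (Q × RType Q)) → Q × RType Q)
    (S : ℕ → Q → Set (Q × RType Q)) (i : ℕ) : Q × RType Q :=
  ((gHist M σ S i).getLastD (S 0, (M.qI, InitT M M.qI))).2

/-- Player O wins the abstract game `𝒢(A)` (with parameter `d` and fixed representative
runs `rep t` for the realized types `t`): she has a strategy such that against every sequence
of classes played by Player I, all her moves are legal and the concatenation
`ρ_{t_1} ρ_{t_2} ρ_{t_3} ⋯` of representative runs is accepting. -/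
def GWinsO [Inhabited I] [Inhabited O] (M : PACost Q (I × O)) (d : ℕ)
    (rep : RType Q → Q × List (I × O)) : Prop :=
  ∃ σ, ∀ S : ℕ → Q → Set (Q × RType Q), (∀ i, S i ∈ Rcls M d) →
    (∀ i, gQT M σ S (i + 1) ∈ S i (gQT M σ S i).1) ∧
    Accepting M (rep (gQT M σ S 1).2).1
      (flatWord fun j => (rep (gQT M σ S (j + 1)).2).2)

end PACost

namespace PACost

section aux

variable {Q A : Type}

theorem stateAt_add (M : PACost Q A) (q0 : Q) (w : ℕ → A) (a j : ℕ) :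
    M.stateAt q0 w (a + j) = M.stateAt (M.stateAt q0 w a) (fun i => w (a + i)) j := by
  induction j with
  | zero => rfl
  | succ j ih => rw [← Nat.add_assoc]; simp only [stateAt]; rw [ih]

theorem seg_zero_succ (w : ℕ → A) (n : ℕ) : seg w 0 (n + 1) = seg w 0 n ++ [w n] := by
  simp [seg, List.range_succ]

theorem seg_length (w : ℕ → A) (a b : ℕ) : (seg w a b).length = b - a := by simp [seg]

theorem seg_getElem (w : ℕ → A) (a b j : ℕ) (h : j < (seg w a b).length) :
    (seg w a b)[j] = w (a + j) := by simp [seg]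

theorem seg_getD (w : ℕ → A) (a b j : ℕ) (x : A) (h : j < b - a) :
    (seg w a b).getD j x = w (a + j) := by
  rw [List.getD_eq_getElem _ _ (by rw [seg_length]; exact h), seg_getElem]

theorem seg_eq_shift (w : ℕ → A) (a b : ℕ) :
    seg w a b = seg (fun i => w (a + i)) 0 (b - a) := by simp [seg]

theorem seg_self [Inhabited A] (l : List A) :
    seg (fun i => l.getD i default) 0 l.length = l := by
  apply List.ext_getElem
  · simp [seg]
  · intro i h1 h2
    rw [seg_getElem]; simp [h2]

theorem foldl_seg (M : PACost Q A) (q : Q) (w : ℕ → A) (n : ℕ) :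
    (seg w 0 n).foldl M.δ q = M.stateAt q w n := by
  induction n with
  | zero => rfl
  | succ n ih => rw [seg_zero_succ, List.foldl_append, ih]; rfl

theorem scanl_seg (M : PACost Q A) (q : Q) (w : ℕ → A) (n : ℕ) :
    List.scanl M.δ q (seg w 0 n) = (List.range (n + 1)).map (M.stateAt q w) := by
  induction n with
  | zero => rfl
  | succ n ih =>
    rw [seg_zero_succ, List.scanl_append, ih, foldl_seg]
    rw [List.range_succ (n := n + 1), List.map_append]
    simp [stateAt]

/-- explicit type of the first `n` transitions -/
def RT (M : PACost Q A) (q : Q) (w : ℕ → A) (n : ℕ) : RType Q :=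
  ( q, M.stateAt q w n,
    ((Finset.range (n + 1)).filter fun j => Even (M.Ω (M.stateAt q w j))).sup
      (fun j => (M.Ω (M.stateAt q w j) : WithBot ℕ)),
    ((Finset.range (n + 1)).filter fun j =>
        Odd (M.Ω (M.stateAt q w j)) ∧ ∀ j' < n + 1, j < j' →
          ¬(Even (M.Ω (M.stateAt q w j')) ∧ M.Ω (M.stateAt q w j) < M.Ω (M.stateAt q w j'))).sup
      (fun j => (M.Ω (M.stateAt q w j) : WithBot ℕ)),
    decide (∃ j < n, M.Cst (M.stateAt q w j) (w j) = true) )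

theorem runType_seg (M : PACost Q A) (q : Q) (w : ℕ → A) (n : ℕ) :
    M.runType q (seg w 0 n) = M.RT q w n := by
  have hst : ∀ j < n + 1, ((List.range (n + 1)).map (M.stateAt q w)).getD j q = M.stateAt q w j := by
    intro j hj
    simp [hj]
  unfold runType RT
  simp only [scanl_seg, foldl_seg, List.length_map, List.length_range]
  refine Prod.ext rfl (Prod.ext rfl (Prod.ext ?_ (Prod.ext ?_ ?_)))
  · simp only
    apply Finset.sup_congr
    · apply Finset.filter_congr
      intro j hj
      rw [hst j (Finset.mem_range.1 hj)]
    · intro j hj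
      rw [hst j (Finset.mem_range.1 (Finset.mem_filter.1 hj).1)]
  · simp only
    apply Finset.sup_congr
    · apply Finset.filter_congr
      intro j hj
      rw [hst j (Finset.mem_range.1 hj)]
      apply and_congr Iff.rfl
      apply forall_congr'
      intro j'
      apply forall_congr'
      intro hj'
      rw [hst j' hj']
    · intro j hj
      rw [hst j (Finset.mem_range.1 (Finset.mem_filter.1 hj).1)]
  · simp only
    rw [Bool.eq_iff_iff]
    simp only [List.any_eq_true, decide_eq_true_eq]
    constructor
    · rintro ⟨p, hp, hc⟩
      obtain ⟨j, hj, rfl⟩ := List.mem_iff_getElem.1 hp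
      have hj' : j < n := by
        simp [seg] at hj; omega
      refine ⟨j, hj', ?_⟩
      simpa [seg] using hc
    · rintro ⟨j, hj, hc⟩
      refine ⟨(M.stateAt q w j, w j), ?_, hc⟩
      apply List.mem_iff_getElem.2
      refine ⟨j, by simp [seg]; omega, by simp [seg]⟩

theorem RT_zero (M : PACost Q A) (q : Q) (w : ℕ → A) : M.RT q w 0 = M.InitT q := by
  unfold RT InitT
  refine Prod.ext rfl (Prod.ext rfl (Prod.ext ?_ (Prod.ext ?_ ?_)))
  · simp only [stateAt]
    by_cases h : Even (M.Ω q) <;> simp [h, stateAt, Finset.filter_singleton]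
  · by_cases h : Odd (M.Ω q)
    · simp [h, stateAt, Finset.filter_singleton]
    · have h' := Nat.not_odd_iff_even.1 h
      simp [h, stateAt, Finset.filter_singleton]
  · simp

theorem RT_succ (M : PACost Q A) (q : Q) (w : ℕ → A) (n : ℕ) :
    M.RT q w (n + 1) = M.UpdT (M.RT q w n) (w n) := by
  unfold RT UpdT
  have hs : M.δ (M.stateAt q w n) (w n) = M.stateAt q w (n + 1) := rfl
  simp only [hs]
  refine Prod.ext rfl (Prod.ext rfl (Prod.ext ?_ (Prod.ext ?_ ?_)))
  · simp only
    rw [Finset.range_add_one (n := n + 1), Finset.filter_insert]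
    split_ifs with h
    · rw [Finset.sup_insert]; exact max_comm _ _
    · rfl
  · simp only
    by_cases hO : Odd (M.Ω (M.stateAt q w (n + 1)))
    · have hE := Nat.not_even_iff_odd.2 hO
      rw [if_pos hO, max_comm]
      refine Eq.trans ?_ (Finset.sup_insert (b := n + 1)
        (f := fun j => (M.Ω (M.stateAt q w j) : WithBot ℕ)))
      apply Finset.sup_congr _ (fun _ _ => rfl)
      ext j
      simp only [Finset.mem_filter, Finset.mem_range, Finset.mem_insert]
      constructor
      · rintro ⟨h1, h2, h3⟩
        by_cases hj : j = n + 1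
        · exact Or.inl hj
        · exact Or.inr ⟨by omega, h2, fun j' h4 h5 => h3 j' (by omega) h5⟩
      · rintro (rfl | ⟨h1, h2, h3⟩)
        · exact ⟨by omega, hO, fun j' h4 h5 => by omega⟩
        · refine ⟨by omega, h2, fun j' h4 h5 => ?_⟩
          by_cases hj : j' = n + 1
          · subst hj; exact fun h => hE h.1
          · exact h3 j' (by omega) h5
    · have hE := Nat.not_odd_iff_even.1 hO
      rw [if_neg hO]
      have hset : ∀ j, (j ∈ ((Finset.range (n + 1 + 1)).filter fun j =>
        Odd (M.Ω (M.stateAt q w j)) ∧ ∀ j' < n + 1 + 1, j < j' →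
          ¬(Even (M.Ω (M.stateAt q w j')) ∧ M.Ω (M.stateAt q w j) < M.Ω (M.stateAt q w j')))) ↔
          (j ∈ ((Finset.range (n + 1)).filter fun j =>
        Odd (M.Ω (M.stateAt q w j)) ∧ ∀ j' < n + 1, j < j' →
          ¬(Even (M.Ω (M.stateAt q w j')) ∧ M.Ω (M.stateAt q w j) < M.Ω (M.stateAt q w j'))) ∧
          ¬ M.Ω (M.stateAt q w j) < M.Ω (M.stateAt q w (n + 1))) := by
        intro j
        simp only [Finset.mem_filter, Finset.mem_range]
        constructor
        · rintro ⟨h1, h2, h3⟩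
          have hj : j ≠ n + 1 := by rintro rfl; exact hO h2
          exact ⟨⟨by omega, h2, fun j' h4 h5 => h3 j' (by omega) h5⟩,
            fun h => h3 (n + 1) (by omega) (by omega) ⟨hE, h⟩⟩
        · rintro ⟨⟨h1, h2, h3⟩, h4⟩
          refine ⟨by omega, h2, fun j' h5 h6 => ?_⟩
          by_cases hj : j' = n + 1
          · subst hj; exact fun h => h4 h.2
          · exact h3 j' (by omega) h6
      generalize ((Finset.range (n + 1 + 1)).filter fun j =>
        Odd (M.Ω (M.stateAt q w j)) ∧ ∀ j' < n + 1 + 1, j < j' →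
          ¬(Even (M.Ω (M.stateAt q w j')) ∧ M.Ω (M.stateAt q w j) < M.Ω (M.stateAt q w j'))) = s1
        at hset ⊢
      generalize ((Finset.range (n + 1)).filter fun j =>
        Odd (M.Ω (M.stateAt q w j)) ∧ ∀ j' < n + 1, j < j' →
          ¬(Even (M.Ω (M.stateAt q w j')) ∧ M.Ω (M.stateAt q w j) < M.Ω (M.stateAt q w j'))) = s0
        at hset ⊢
      split_ifs with hc
      · obtain ⟨c, hc, ha⟩ := hc
        have : s1 = ∅ := by
          rw [Finset.eq_empty_iff_forall_notMem]
          intro j hj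
          obtain ⟨h1, h2⟩ := (hset j).1 hj
          have h3 := Finset.le_sup (f := fun j => (M.Ω (M.stateAt q w j) : WithBot ℕ)) h1
          rw [hc] at h3
          have h4 : M.Ω (M.stateAt q w j) ≤ c := by exact_mod_cast h3
          exact h2 (lt_of_le_of_lt h4 ha.2.1)
        rw [this]; rfl
      · apply le_antisymm
        · apply Finset.sup_mono
          intro j hj
          exact ((hset j).1 hj).1
        · rcases s0.eq_empty_or_nonempty with h0 | h0
          · rw [h0]; simp
          · obtain ⟨j, hj, hjs⟩ := Finset.exists_mem_eq_sup s0 h0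
              (fun j => (M.Ω (M.stateAt q w j) : WithBot ℕ))
            rw [hjs]
            apply Finset.le_sup (f := fun j => (M.Ω (M.stateAt q w j) : WithBot ℕ))
            refine (hset j).2 ⟨hj, fun h => hc ⟨_, hjs, ⟨_, rfl⟩, h, hE⟩⟩
  · simp only
    rw [Bool.eq_iff_iff]
    simp only [Bool.or_eq_true, decide_eq_true_eq]
    constructor
    · rintro ⟨j, hj, hc⟩
      by_cases h : j = n
      · subst h; exact Or.inr hc
      · exact Or.inl ⟨j, by omega, hc⟩
    · rintro (⟨j, hj, hc⟩ | hc)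
      · exact ⟨j, by omega, hc⟩
      · exact ⟨n, by omega, hc⟩

theorem runType_eq [Inhabited A] (M : PACost Q A) (q : Q) (l : List A) :
    M.runType q l = l.foldl M.UpdT (M.InitT q) := by
  have key : ∀ (w : ℕ → A) n, M.RT q w n = (seg w 0 n).foldl M.UpdT (M.InitT q) := by
    intro w n
    induction n with
    | zero => rw [RT_zero]; rfl
    | succ n ih => rw [RT_succ, ih, seg_zero_succ, List.foldl_append]; rfl
  have := key (fun i => l.getD i default) l.length
  rw [seg_self] at this
  rw [← this, ← runType_seg, seg_self]

theorem stateAt_congr (M : PACost Q A) (q : Q) (w w' : ℕ → A) (n : ℕ)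
    (h : ∀ j < n, w j = w' j) : M.stateAt q w n = M.stateAt q w' n := by
  induction n with
  | zero => rfl
  | succ n ih =>
    simp only [stateAt]
    rw [ih (fun j hj => h j (by omega)), h n (by omega)]

theorem seg_congr (w w' : ℕ → A) (a b : ℕ)
    (h : ∀ j, j < b → w j = w' j) : seg w a b = seg w' a b := by
  unfold seg
  apply List.map_congr_left
  intro i hi
  rw [List.mem_range] at hi
  exact h _ (by omega)

theorem seg_append (w : ℕ → A) {a b c : ℕ} (h1 : a ≤ b) (h2 : b ≤ c) :
    seg w a b ++ seg w b c = seg w a c := by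
  apply List.ext_getElem
  · simp [seg]; omega
  · intro i h3 h4
    rw [List.getElem_append, seg_getElem]
    split_ifs with h
    · rw [seg_getElem]
    · rw [seg_getElem, seg_length]
      rw [seg_length] at h
      congr 1; omega

theorem flatten_seg (w : ℕ → A) (p : ℕ → ℕ) (hp : Monotone p) (n : ℕ) :
    ((List.range n).map fun i => seg w (p i) (p (i + 1))).flatten = seg w (p 0) (p n) := by
  induction n with
  | zero => simp [seg]
  | succ n ih =>
    rw [List.range_succ, List.map_append, List.flatten_append, ih]
    simp only [List.map_cons, List.map_nil, List.flatten_cons, List.flatten_nil, List.append_nil]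
    exact seg_append w (hp (Nat.zero_le _)) (hp (Nat.le_succ _))

theorem flatWord_seg [Inhabited A] (w : ℕ → A) (p : ℕ → ℕ) (hp : StrictMono p) (h0 : p 0 = 0) :
    flatWord (fun i => seg w (p i) (p (i + 1))) = w := by
  funext n
  unfold flatWord
  rw [flatten_seg w p hp.monotone, h0, seg_getD]
  · simp
  · have := hp.id_le (n + 1)
    simp at this; omega

/-- block boundaries -/
def bd (u : ℕ → List A) (i : ℕ) : ℕ := ∑ l ∈ Finset.range i, (u l).length

theorem bd_succ (u : ℕ → List A) (i : ℕ) : bd u (i + 1) = bd u i + (u i).length :=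
  Finset.sum_range_succ _ _

theorem bd_strictMono (u : ℕ → List A) (h : ∀ i, u i ≠ []) : StrictMono (bd u) := by
  apply strictMono_nat_of_lt_succ
  intro i
  rw [bd_succ]
  have := List.length_pos_iff.2 (h i)
  omega

theorem flatten_length (u : ℕ → List A) (n : ℕ) :
    (((List.range n).map u).flatten).length = bd u n := by
  induction n with
  | zero => rfl
  | succ n ih =>
    rw [List.range_succ, List.map_append, List.flatten_append, List.length_append, ih, bd_succ]
    simp

theorem flatten_prefix (u : ℕ → List A) {m n : ℕ} (h : m ≤ n) :
    ((List.range m).map u).flatten <+: ((List.range n).map u).flatten := by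
  induction n, h using Nat.le_induction with
  | base => exact List.prefix_rfl
  | succ n hmn ih =>
    refine ih.trans ?_
    rw [List.range_succ, List.map_append, List.flatten_append]
    exact List.prefix_append _ _

theorem flatWord_eq [Inhabited A] (u : ℕ → List A) (hu : ∀ i, u i ≠ []) (m n : ℕ)
    (h : n < bd u m) : flatWord u n = ((List.range m).map u).flatten.getD n default := by
  unfold flatWord
  have hn : n < bd u (n + 1) := by
    have := (bd_strictMono u hu).id_le (n + 1)
    simp at this; omega
  rcases le_total (n + 1) m with hm | hm
  · have := flatten_prefix u hm
    rw [List.getD_eq_getElem _ _ (by rw [flatten_length]; exact hn),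
      List.getD_eq_getElem _ _ (by rw [flatten_length]; exact h)]
    exact this.getElem _
  · have := flatten_prefix u hm
    rw [List.getD_eq_getElem _ _ (by rw [flatten_length]; exact hn),
      List.getD_eq_getElem _ _ (by rw [flatten_length]; exact h)]
    exact (this.getElem _).symm

theorem seg_flatWord_zero [Inhabited A] (u : ℕ → List A) (hu : ∀ i, u i ≠ []) (m : ℕ) :
    seg (flatWord u) 0 (bd u m) = ((List.range m).map u).flatten := by
  apply List.ext_getElem
  · rw [flatten_length, seg_length]; omega
  · intro i h1 h2
    rw [seg_getElem, Nat.zero_add, flatWord_eq u hu m i (by rw [flatten_length] at h2; exact h2)]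
    exact List.getD_eq_getElem _ _ h2

theorem seg_flatWord [Inhabited A] (u : ℕ → List A) (hu : ∀ i, u i ≠ []) (m : ℕ) :
    seg (flatWord u) (bd u m) (bd u (m + 1)) = u m := by
  have h1 := seg_flatWord_zero u hu (m + 1)
  rw [← seg_append (flatWord u) (Nat.zero_le (bd u m)) ((bd_strictMono u hu).monotone (Nat.le_succ m)),
    seg_flatWord_zero u hu m, List.range_succ, List.map_append, List.flatten_append] at h1
  simpa using h1

/-! ### acceptance -/

theorem accepting_iff (M : PACost Q A) (q : Q) (w : ℕ → A) :
    M.Accepting q w ↔ ∃ B N : ℕ, ∀ n ≥ N, Odd (M.Ω (M.stateAt q w n)) →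
      ∃ n' > n, Even (M.Ω (M.stateAt q w n')) ∧
        M.Ω (M.stateAt q w n) < M.Ω (M.stateAt q w n') ∧ M.segCost q w n n' ≤ B := by
  unfold Accepting
  constructor
  · intro h
    obtain ⟨L, hL⟩ := ENat.ne_top_iff_exists.1 h.ne
    have h1 : Filter.limsup (fun n => Cor M q w n) Filter.atTop < ((L + 1 : ℕ) : ℕ∞) := by
      rw [← hL]; exact_mod_cast Nat.lt_succ_self L
    have h2 := Filter.eventually_lt_of_limsup_lt h1
    obtain ⟨N, hN⟩ := Filter.eventually_atTop.1 h2
    refine ⟨L + 1, N, fun n hn ho => ?_⟩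
    have h3 := hN n hn
    unfold Cor at h3
    rw [if_neg (Nat.not_even_iff_odd.2 ho)] at h3
    obtain ⟨c, ⟨n', hn', ha, rfl⟩, hc⟩ := sInf_lt_iff.1 h3
    refine ⟨n', hn', ha.2.2, ha.2.1, ?_⟩
    exact le_of_lt (by exact_mod_cast hc)
  · rintro ⟨B, N, h⟩
    have : Filter.limsup (fun n => Cor M q w n) Filter.atTop ≤ (B : ℕ∞) := by
      apply Filter.limsup_le_of_le
      · exact Filter.isCobounded_le_of_bot
      filter_upwards [Filter.eventually_ge_atTop N] with n hn
      unfold Cor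
      split_ifs with he
      · simp
      · obtain ⟨n', h1, h2, h3, h4⟩ := h n hn (Nat.not_even_iff_odd.1 he)
        refine le_trans (sInf_le ⟨n', h1, ⟨⟨_, rfl⟩, h3, h2⟩, rfl⟩) ?_
        exact_mod_cast h4
    exact lt_of_le_of_lt this (ENat.natCast_lt_top B)

theorem segCost_mono (M : PACost Q A) (q : Q) (w : ℕ → A) {a b c d : ℕ} (h1 : a ≤ b) (h2 : c ≤ d) :
    M.segCost q w b c ≤ M.segCost q w a d := by
  unfold segCost
  apply Finset.card_le_card
  apply Finset.filter_subset_filter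
  exact Finset.Ico_subset_Ico h1 h2

theorem segCost_le (M : PACost Q A) (q : Q) (w : ℕ → A) (a b : ℕ) :
    M.segCost q w a b ≤ b - a := by
  unfold segCost
  exact (Finset.card_filter_le _ _).trans (by simp)

theorem segCost_add (M : PACost Q A) (q : Q) (w : ℕ → A) {a b c : ℕ} (h1 : a ≤ b) (h2 : b ≤ c) :
    M.segCost q w a c = M.segCost q w a b + M.segCost q w b c := by
  unfold segCost
  rw [← Finset.card_union_of_disjoint, ← Finset.filter_union, Finset.Ico_union_Ico_eq_Ico h1 h2]
  apply Finset.disjoint_filter_filter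
  exact Finset.Ico_disjoint_Ico_consecutive a b c

theorem segCost_pos (M : PACost Q A) (q : Q) (w : ℕ → A) (a b : ℕ) :
    0 < M.segCost q w a b ↔ ∃ j, a ≤ j ∧ j < b ∧ M.Cst (M.stateAt q w j) (w j) = true := by
  unfold segCost
  rw [Finset.card_pos]
  constructor
  · rintro ⟨j, hj⟩
    simp only [Finset.mem_filter, Finset.mem_Ico] at hj
    exact ⟨j, hj.1.1, hj.1.2, hj.2⟩
  · rintro ⟨j, h1, h2, h3⟩
    exact ⟨j, by simp only [Finset.mem_filter, Finset.mem_Ico]; exact ⟨⟨h1, h2⟩, h3⟩⟩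

theorem transfer_core (M : PACost Q A) (q q' : Q) (w w' : ℕ → A) (p p' : ℕ → ℕ)
    (hp : StrictMono p) (hp' : StrictMono p') (h0' : p' 0 = 0) (B : ℕ)
    (hB : ∀ i, p' (i + 1) ≤ p' i + B)
    (H1 : ∀ i, 0 < M.segCost q' w' (p' i) (p' (i + 1)) → 0 < M.segCost q w (p i) (p (i + 1)))
    (H2 : ∀ i m, p i ≤ m → m ≤ p (i + 1) → Even (M.Ω (M.stateAt q w m)) →
      ∃ m', p' i ≤ m' ∧ m' ≤ p' (i + 1) ∧ Even (M.Ω (M.stateAt q' w' m')) ∧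
        M.Ω (M.stateAt q w m) ≤ M.Ω (M.stateAt q' w' m'))
    (H3 : ∀ i m, p' i ≤ m → m ≤ p' (i + 1) → Odd (M.Ω (M.stateAt q' w' m)) →
      (∀ j, m < j → j ≤ p' (i + 1) → ¬ (Even (M.Ω (M.stateAt q' w' j)) ∧
        M.Ω (M.stateAt q' w' m) < M.Ω (M.stateAt q' w' j))) →
      ∃ m', p i ≤ m' ∧ m' ≤ p (i + 1) ∧ Odd (M.Ω (M.stateAt q w m')) ∧
        M.Ω (M.stateAt q' w' m) ≤ M.Ω (M.stateAt q w m') ∧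
        (∀ j, m' < j → j ≤ p (i + 1) → ¬ (Even (M.Ω (M.stateAt q w j)) ∧
          M.Ω (M.stateAt q w m') < M.Ω (M.stateAt q w j)))) :
    M.Accepting q w → M.Accepting q' w' := by
  rw [accepting_iff, accepting_iff]
  rintro ⟨B0, N0, hacc⟩
  have hcost : ∀ a b, a ≤ b →
      M.segCost q' w' (p' a) (p' b) ≤ B * M.segCost q w (p a) (p b) := by
    intro a b hab
    induction b, hab using Nat.le_induction with
    | base => simp [segCost]
    | succ b hb ih =>
      rw [segCost_add M q' w' (hp'.monotone hb) (hp'.monotone (Nat.le_succ b)),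
        segCost_add M q w (hp.monotone hb) (hp.monotone (Nat.le_succ b)), Nat.mul_add]
      apply Nat.add_le_add ih
      simp only [Nat.succ_eq_add_one]
      rcases Nat.eq_zero_or_pos (M.segCost q' w' (p' b) (p' (b + 1))) with h | h
      · rw [h]; exact Nat.zero_le _
      · have h1 := H1 b h
        have h2 := segCost_le M q' w' (p' b) (p' (b + 1))
        have h3 := hB b
        calc _ ≤ B := by omega
          _ ≤ B * M.segCost q w (p b) (p (b + 1)) := Nat.le_mul_of_pos_right _ h1
  refine ⟨2 * B + B * B0, p' N0, fun n hn hodd => ?_⟩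
  obtain ⟨i, hi1, hi2⟩ : ∃ i, p' i ≤ n ∧ n < p' (i + 1) := by
    have hex : ∃ i, n < p' (i + 1) := ⟨n, by have := hp'.id_le (n + 1); simp at this; omega⟩
    refine ⟨Nat.find hex, ?_, Nat.find_spec hex⟩
    rcases hh : Nat.find hex with _ | k
    · omega
    · have := Nat.find_min hex (m := k) (by omega)
      omega
  have hiN : N0 ≤ i := by
    by_contra hlt
    have := hp'.monotone (show i + 1 ≤ N0 by omega)
    omega
  by_cases hans : ∃ n', n < n' ∧ n' ≤ p' (i + 1) ∧ Even (M.Ω (M.stateAt q' w' n')) ∧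
        M.Ω (M.stateAt q' w' n) < M.Ω (M.stateAt q' w' n')
  · obtain ⟨n', h1, h2, h3, h4⟩ := hans
    refine ⟨n', h1, h3, h4, ?_⟩
    have h5 := segCost_le M q' w' n n'
    have h6 := hB i
    have : n' - n ≤ B := by omega
    calc _ ≤ B := by omega
      _ ≤ _ := by nlinarith [Nat.zero_le (B * B0)]
  · obtain ⟨m, hm1, hm2, hm3, hm4, hm5⟩ := H3 i n hi1 hi2.le hodd
      (fun j h1 h2 h3 => hans ⟨j, h1, h2, h3.1, h3.2⟩)
    have hmN : N0 ≤ m := by have := hp.id_le i; simp at this; omega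
    obtain ⟨m', g1, g2, g3, g4⟩ := hacc m hmN hm3
    have hm' : p (i + 1) < m' := by
      by_contra hlt
      exact hm5 m' g1 (by omega) ⟨g2, g3⟩
    obtain ⟨j, hj1, hj2, hj3⟩ : ∃ j, i + 1 ≤ j ∧ p j < m' ∧ m' ≤ p (j + 1) := by
      have hex : ∃ j, m' ≤ p (j + 1) := ⟨m', by have := hp.id_le (m' + 1); simp at this; omega⟩
      have h1 : i + 1 ≤ Nat.find hex := by
        by_contra hlt
        have h2 := Nat.find_spec hex
        have h3 := hp.monotone (show Nat.find hex + 1 ≤ i + 1 by omega)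
        omega
      refine ⟨Nat.find hex, h1, ?_, Nat.find_spec hex⟩
      rcases hh : Nat.find hex with _ | k
      · omega
      · have := Nat.find_min hex (m := k) (by omega)
        omega
    obtain ⟨n', k1, k2, k3, k4⟩ := H2 j m' hj2.le hj3 g2
    have e1 : p' (i + 1) ≤ p' j := hp'.monotone hj1
    refine ⟨n', by omega, k3, by omega, ?_⟩
    have c1 := segCost_mono M q' w' hi1 k2
    have c2 := segCost_add M q' w' (hp'.monotone (Nat.le_succ i)) (hp'.monotone (show i + 1 ≤ j + 1 by omega))
    have c3 := segCost_add M q' w' (hp'.monotone hj1) (hp'.monotone (Nat.le_succ j))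
    have c4 := segCost_le M q' w' (p' i) (p' (i + 1))
    have c5 := segCost_le M q' w' (p' j) (p' (j + 1))
    have c6 := hcost (i + 1) j hj1
    have c7 := segCost_mono M q w hm2 hj2.le
    have c8 := Nat.mul_le_mul_left B (c7.trans g4)
    have b1 := hB i
    have b2 := hB j
    simp only [Nat.succ_eq_add_one] at c2 c3
    omega

theorem RT_even (M : PACost Q A) (q q' : Q) (w w' : ℕ → A) (n n' : ℕ)
    (h : (M.RT q w n).2.2.1 = (M.RT q' w' n').2.2.1) (m : ℕ) (hm : m ≤ n)
    (he : Even (M.Ω (M.stateAt q w m))) :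
    ∃ m' ≤ n', Even (M.Ω (M.stateAt q' w' m')) ∧
        M.Ω (M.stateAt q w m) ≤ M.Ω (M.stateAt q' w' m') := by
  have h1 : (M.Ω (M.stateAt q w m) : WithBot ℕ) ≤ (M.RT q w n).2.2.1 := by
    simp only [RT]
    apply Finset.le_sup (f := fun j => (M.Ω (M.stateAt q w j) : WithBot ℕ))
    simp only [Finset.mem_filter, Finset.mem_range]
    exact ⟨by omega, he⟩
  rw [h] at h1
  simp only [RT] at h1
  obtain ⟨m', h2, h3⟩ := (Finset.le_sup_iff (WithBot.bot_lt_coe _)).1 h1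
  simp only [Finset.mem_filter, Finset.mem_range] at h2
  exact ⟨m', by omega, h2.2, by exact_mod_cast h3⟩

theorem RT_odd (M : PACost Q A) (q q' : Q) (w w' : ℕ → A) (n n' : ℕ)
    (h : (M.RT q w n).2.2.2.1 = (M.RT q' w' n').2.2.2.1) (m : ℕ) (hm : m ≤ n)
    (he : Odd (M.Ω (M.stateAt q w m)))
    (hu : ∀ j, m < j → j ≤ n → ¬ (Even (M.Ω (M.stateAt q w j)) ∧
        M.Ω (M.stateAt q w m) < M.Ω (M.stateAt q w j))) :
    ∃ m' ≤ n', Odd (M.Ω (M.stateAt q' w' m')) ∧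
        M.Ω (M.stateAt q w m) ≤ M.Ω (M.stateAt q' w' m') ∧
        ∀ j, m' < j → j ≤ n' → ¬ (Even (M.Ω (M.stateAt q' w' j)) ∧
        M.Ω (M.stateAt q' w' m') < M.Ω (M.stateAt q' w' j)) := by
  have h1 : (M.Ω (M.stateAt q w m) : WithBot ℕ) ≤ (M.RT q w n).2.2.2.1 := by
    simp only [RT]
    apply Finset.le_sup (f := fun j => (M.Ω (M.stateAt q w j) : WithBot ℕ))
    simp only [Finset.mem_filter, Finset.mem_range]
    exact ⟨by omega, he, fun j' h1 h2 => hu j' h2 (by omega)⟩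
  rw [h] at h1
  simp only [RT] at h1
  obtain ⟨m', h2, h3⟩ := (Finset.le_sup_iff (WithBot.bot_lt_coe _)).1 h1
  simp only [Finset.mem_filter, Finset.mem_range] at h2
  exact ⟨m', by omega, h2.2.1, by exact_mod_cast h3, fun j h4 h5 => h2.2.2 j (by omega) h4⟩

/-- RT of shifted word, last component -/
theorem RT_inc (M : PACost Q A) (q : Q) (w : ℕ → A) (a b : ℕ) (hab : a ≤ b) :
    (M.RT (M.stateAt q w a) (fun i => w (a + i)) (b - a)).2.2.2.2 = true ↔
      0 < M.segCost q w a b := by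
  rw [segCost_pos]
  unfold RT
  simp only [decide_eq_true_eq, ← stateAt_add]
  constructor
  · rintro ⟨j, h1, h2⟩
    exact ⟨a + j, by omega, by omega, h2⟩
  · rintro ⟨j, h1, h2, h3⟩
    refine ⟨j - a, by omega, ?_⟩
    rw [show a + (j - a) = j by omega]; exact h3

theorem transfer [Inhabited A] (M : PACost Q A) (q0 : Q) (u u' : ℕ → List A)
    (hu : ∀ i, u i ≠ []) (hu' : ∀ i, u' i ≠ []) (B : ℕ) (hB : ∀ i, (u' i).length ≤ B)
    (T : ℕ → RType Q) (hT : ∀ i, M.runType (T i).1 (u i) = T i)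
    (hT' : ∀ i, M.runType (T i).1 (u' i) = T i)
    (h0 : (T 0).1 = q0) (hs : ∀ i, (T (i + 1)).1 = (T i).2.1) :
    M.Accepting q0 (flatWord u) → M.Accepting q0 (flatWord u') := by
  have gen : ∀ u : ℕ → List A, (∀ i, u i ≠ []) → (∀ i, M.runType (T i).1 (u i) = T i) →
      ∀ i, T i = M.RT (M.stateAt q0 (flatWord u) (bd u i)) (fun j => flatWord u (bd u i + j))
        (bd u (i + 1) - bd u i) := by
    intro u hu hT
    have hst : ∀ i, M.stateAt q0 (flatWord u) (bd u i) = (T i).1 := by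
      intro i
      induction i with
      | zero => exact h0.symm
      | succ i ih =>
        have h1 : (M.runType (T i).1 (u i)).2.1 = (T i).2.1 := by rw [hT]
        have hlt := bd_strictMono u hu (Nat.lt_add_one i)
        rw [hs, ← h1, show bd u (i + 1) = bd u i + (bd u (i + 1) - bd u i) by omega, stateAt_add, ih,
          ← foldl_seg, ← seg_eq_shift, seg_flatWord u hu]
        rfl
    intro i
    rw [← runType_seg, ← seg_eq_shift, seg_flatWord u hu, hst, hT]
  have g := gen u hu hT
  have g' := gen u' hu' hT'
  have hp := bd_strictMono u hu
  have hp' := bd_strictMono u' hu'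
  have hle : ∀ i, bd u i ≤ bd u (i + 1) := fun i => hp.monotone (Nat.le_succ i)
  have hle' : ∀ i, bd u' i ≤ bd u' (i + 1) := fun i => hp'.monotone (Nat.le_succ i)
  apply transfer_core M q0 q0 _ _ (bd u) (bd u') hp hp' rfl B
  · intro i; rw [bd_succ]; have := hB i; omega
  · intro i h
    rw [← RT_inc M q0 _ _ _ (hle' i), ← g'] at h
    rw [← RT_inc M q0 _ _ _ (hle i), ← g]
    exact h
  · intro i m h1 h2 h3
    have hh := RT_even M _ _ _ _ _ _ (congrArg (fun t => t.2.2.1) ((g i).symm.trans (g' i))) (m - bd u i)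
      (by omega)
    rw [← stateAt_add, show bd u i + (m - bd u i) = m by omega] at hh
    obtain ⟨m', k1, k2, k3⟩ := hh h3
    rw [← stateAt_add] at k2 k3
    have := hle' i
    exact ⟨bd u' i + m', by omega, by omega, k2, k3⟩
  · intro i m h1 h2 h3 h4
    have hh := RT_odd M _ _ _ _ _ _ (congrArg (fun t => t.2.2.2.1) ((g' i).symm.trans (g i)))
      (m - bd u' i) (by omega)
    simp only [← stateAt_add] at hh
    rw [show bd u' i + (m - bd u' i) = m by omega] at hh
    have hl := hle' i
    have hl2 := hle i
    obtain ⟨m', k1, k2, k3, k4⟩ := hh h3 (fun j h5 h6 => h4 _ (by omega) (by omega))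
    refine ⟨bd u i + m', by omega, by omega, k2, k3, fun j h5 h6 => ?_⟩
    have := k4 (j - bd u i) (by omega) (by omega)
    rwa [show bd u i + (j - bd u i) = j by omega] at this

end aux

end PACost

namespace PACost

section aux2

variable {Q I O : Type}

theorem mem_dPPlus (M : PACost Q (I × O)) (l : List I) (S : Set (Q × RType Q)) (x : Q × RType Q) :
    x ∈ M.dPPlus S l ↔ ∃ s ∈ S, ∃ y : List O, y.length = l.length ∧
      x = ((l.zip y).foldl M.δ s.1, (l.zip y).foldl M.UpdT s.2) := by
  induction l generalizing S with
  | nil =>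
    constructor
    · intro h
      exact ⟨x, h, [], rfl, rfl⟩
    · rintro ⟨s, hs, y, hy, rfl⟩
      exact hs
  | cons a l ih =>
    have h1 : M.dPPlus S (a :: l) = M.dPPlus (M.dP S a) l := rfl
    rw [h1, ih]
    constructor
    · rintro ⟨s, ⟨s0, hs0, b, rfl⟩, y, hy, rfl⟩
      exact ⟨s0, hs0, b :: y, by simp [hy], rfl⟩
    · rintro ⟨s, hs, y, hy, rfl⟩
      rcases y with _ | ⟨b, y⟩
      · simp at hy
      · exact ⟨_, ⟨s, hs, b, rfl⟩, y, by simpa using hy, rfl⟩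

theorem mem_rfun [Inhabited I] [Inhabited O] (M : PACost Q (I × O)) (x : List I) (q : Q)
    (s : Q × RType Q) :
    s ∈ M.rfun x q ↔ ∃ y : List O, y.length = x.length ∧
      s = ((x.zip y).foldl M.δ q, M.runType q (x.zip y)) := by
  unfold rfun
  rw [mem_dPPlus]
  constructor
  · rintro ⟨s0, hs0, y, hy, rfl⟩
    rw [Set.mem_singleton_iff] at hs0
    subst hs0
    exact ⟨y, hy, by rw [runType_eq]⟩
  · rintro ⟨y, hy, rfl⟩
    exact ⟨_, rfl, y, hy, by rw [runType_eq]⟩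

theorem rfun_append (M : PACost Q (I × O)) (x x' z : List I) (h : M.rfun x = M.rfun x') :
    M.rfun (x ++ z) = M.rfun (x' ++ z) := by
  funext q
  have := congrFun h q
  unfold rfun dPPlus at *
  rw [List.foldl_append, List.foldl_append, this]

variable [Fintype Q]

/-- possible even/odd entries -/
def colE {A : Type} (M : PACost Q A) : Finset (WithBot ℕ) :=
  insert ⊥ (((Finset.univ.image M.Ω).filter Even).image (fun c : ℕ => (c : WithBot ℕ)))

/-- possible even/odd entries -/
def colD {A : Type} (M : PACost Q A) : Finset (WithBot ℕ) :=
  insert ⊥ (((Finset.univ.image M.Ω).filter fun c => ¬ Even c).image (fun c : ℕ => (c : WithBot ℕ)))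

/-- a finite set containing all types -/
def Tfin {A : Type} (M : PACost Q A) : Finset (RType Q) :=
  Finset.univ ×ˢ Finset.univ ×ˢ colE M ×ˢ colD M ×ˢ Finset.univ

theorem RT_mem {A : Type} (M : PACost Q A) (q : Q) (w : ℕ → A) (n : ℕ) : M.RT q w n ∈ M.Tfin := by
  unfold Tfin
  simp only [Finset.mem_product, Finset.mem_univ, true_and, and_true]
  constructor
  · simp only [RT]
    generalize hs : (Finset.range (n + 1)).filter (fun j => Even (M.Ω (M.stateAt q w j))) = s
    rcases s.eq_empty_or_nonempty with h0 | h0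
    · rw [h0]; simp [colE]
    · obtain ⟨j, hj, hjs⟩ := Finset.exists_mem_eq_sup s h0
              (fun j => (M.Ω (M.stateAt q w j) : WithBot ℕ))
      rw [hjs]
      subst hs
      rw [Finset.mem_filter] at hj
      refine Finset.mem_insert_of_mem (Finset.mem_image_of_mem _ ?_)
      rw [Finset.mem_filter]
      exact ⟨Finset.mem_image_of_mem _ (Finset.mem_univ _), hj.2⟩
  · simp only [RT]
    generalize hs : (Finset.range (n + 1)).filter (fun j =>
        Odd (M.Ω (M.stateAt q w j)) ∧ ∀ j' < n + 1, j < j' →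
          ¬(Even (M.Ω (M.stateAt q w j')) ∧ M.Ω (M.stateAt q w j) < M.Ω (M.stateAt q w j'))) = s
    rcases s.eq_empty_or_nonempty with h0 | h0
    · rw [h0]; simp [colD]
    · obtain ⟨j, hj, hjs⟩ := Finset.exists_mem_eq_sup s h0
              (fun j => (M.Ω (M.stateAt q w j) : WithBot ℕ))
      rw [hjs]
      subst hs
      rw [Finset.mem_filter] at hj
      refine Finset.mem_insert_of_mem (Finset.mem_image_of_mem _ ?_)
      rw [Finset.mem_filter]
      exact ⟨Finset.mem_image_of_mem _ (Finset.mem_univ _), Nat.not_even_iff_odd.2 hj.2.1⟩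

theorem runType_mem {A : Type} [Inhabited A] (M : PACost Q A) (q : Q) (l : List A) :
    M.runType q l ∈ M.Tfin := by
  rw [← seg_self l, runType_seg]
  exact RT_mem _ _ _ _

theorem Tfin_card {A : Type} (M : PACost Q A) (he : ∃ q, Even (M.Ω q)) (ho : ∃ q, Odd (M.Ω q)) :
    M.Tfin.card ≤ 2 * Fintype.card Q ^ 4 * (Finset.univ.image M.Ω).card ^ 2 := by
  have hsum := Finset.card_filter_add_card_filter_not (s := Finset.univ.image M.Ω) (fun c => Even c)
  have hE : (colE M).card ≤ ((Finset.univ.image M.Ω).filter Even).card + 1 :=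
    (Finset.card_insert_le _ _).trans (Nat.add_le_add_right Finset.card_image_le 1)
  have hD : (colD M).card ≤ ((Finset.univ.image M.Ω).filter fun c => ¬ Even c).card + 1 :=
    (Finset.card_insert_le _ _).trans (Nat.add_le_add_right Finset.card_image_le 1)
  have hE1 : 0 < ((Finset.univ.image M.Ω).filter fun c => Even c).card := by
    obtain ⟨q, hq⟩ := he
    apply Finset.card_pos.2
    exact ⟨M.Ω q, Finset.mem_filter.2 ⟨Finset.mem_image_of_mem _ (Finset.mem_univ _), hq⟩⟩
  have hD1 : 0 < ((Finset.univ.image M.Ω).filter fun c => ¬ Even c).card := by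
    obtain ⟨q, hq⟩ := ho
    apply Finset.card_pos.2
    exact ⟨M.Ω q, Finset.mem_filter.2 ⟨Finset.mem_image_of_mem _ (Finset.mem_univ _),
      Nat.not_even_iff_odd.2 hq⟩⟩
  have hn : 0 < Fintype.card Q := by
    obtain ⟨q, _⟩ := he
    exact Fintype.card_pos_iff.2 ⟨q⟩
  unfold Tfin
  simp only [Finset.card_product, Finset.card_univ, Fintype.card_bool]
  generalize (colE M).card = e at *
  generalize (colD M).card = o at *
  generalize (Finset.univ.image M.Ω).card = k at *
  generalize ((Finset.univ.image M.Ω).filter fun c => Even c).card = ke at *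
  generalize ((Finset.univ.image M.Ω).filter fun c => ¬ Even c).card = ko at *
  generalize Fintype.card Q = n at *
  have h1 : e * o ≤ k ^ 2 := by
    calc e * o ≤ (ke + 1) * (ko + 1) := Nat.mul_le_mul hE hD
      _ ≤ k ^ 2 := by rw [← hsum]; nlinarith
  have h2 : n ^ 2 ≤ n ^ 4 := Nat.pow_le_pow_right hn (by norm_num)
  calc n * (n * (e * (o * 2))) = 2 * (n ^ 2 * (e * o)) := by ring
    _ ≤ 2 * (n ^ 4 * k ^ 2) := Nat.mul_le_mul_left _ (Nat.mul_le_mul h2 h1)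
    _ = _ := by ring

theorem pump [Inhabited I] [Inhabited O] (M : PACost Q (I × O)) (d : ℕ)
    (hd : 2 ^ M.Tfin.card ≤ d) (r : Q → Set (Q × RType Q)) (hr : r ∈ M.Rcls d) (N : ℕ) :
    ∃ x : List I, N ≤ x.length ∧ M.rfun x = r := by
  obtain ⟨x, hx, rfl⟩ := hr
  let code : List I → Finset (RType Q) := fun x => M.Tfin.filter fun t => (t.2.1, t) ∈ M.rfun x t.1
  have hcode : ∀ x x' : List I, code x = code x' → ∀ q, M.rfun x q ⊆ M.rfun x' q := by
    intro x x' h q s hs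
    obtain ⟨y, hy, rfl⟩ := (mem_rfun M x q s).1 hs
    have h1 : M.runType q (x.zip y) ∈ code x :=
      Finset.mem_filter.2 ⟨runType_mem _ _ _, hs⟩
    rw [h] at h1
    exact (Finset.mem_filter.1 h1).2
  have hcode' : ∀ x x' : List I, code x = code x' → M.rfun x = M.rfun x' := fun x x' h =>
    funext fun q => Set.Subset.antisymm (hcode x x' h q) (hcode x' x h.symm q)
  have hpos : 0 < 2 ^ M.Tfin.card := by positivity
  obtain ⟨i, hi, j, hj, hij, hc⟩ := Finset.exists_ne_map_eq_of_card_lt_of_maps_to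
    (s := Finset.range (2 * d + 1)) (t := M.Tfin.powerset) (f := fun i => code (x.take i))
    (by rw [Finset.card_powerset, Finset.card_range]; omega)
    (by intro i _; exact Finset.mem_coe.2 (Finset.mem_powerset.2 (Finset.filter_subset _ _)))
  have main : ∀ i j, i < j → j ≤ x.length → code (x.take i) = code (x.take j) →
      ∃ x' : List I, N ≤ x'.length ∧ M.rfun x' = M.rfun x := by
    intro i j hij hj hc
    have key : ∀ N, ∃ z : List I, N ≤ z.length ∧ M.rfun (x.take i ++ z) = M.rfun x := by
      intro N
      induction N with
      | zero => exact ⟨x.drop i, Nat.zero_le _, by rw [List.take_append_drop]⟩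
      | succ N ih =>
        obtain ⟨z, hz, hzr⟩ := ih
        refine ⟨(x.take j).drop i ++ z, ?_, ?_⟩
        · simp; omega
        · rw [← List.append_assoc]
          have : x.take i ++ (x.take j).drop i = x.take j := by
            conv_rhs => rw [← List.take_append_drop i (x.take j)]
            rw [List.take_take, min_eq_left hij.le]
          rw [this, ← hzr]
          exact rfun_append M _ _ z (hcode' _ _ hc.symm)
    obtain ⟨z, hz, hzr⟩ := key N
    exact ⟨_, by rw [List.length_append]; omega, hzr⟩
  rw [Finset.mem_range] at hi hj
  rcases lt_or_gt_of_ne hij with h | h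
  · exact main i j h (by omega) hc
  · exact main j i h (by omega) hc.symm

theorem gHist_congr (M : PACost Q (I × O))
    (σ : List ((Q → Set (Q × RType Q)) × (Q × RType Q)) → (Q → Set (Q × RType Q)) → Q × RType Q)
    (S S' : ℕ → Q → Set (Q × RType Q)) (i : ℕ) (h : ∀ j ≤ i, S j = S' j) :
    M.gHist σ S i = M.gHist σ S' i := by
  induction i with
  | zero => simp only [gHist, h 0 le_rfl]
  | succ i ih => simp only [gHist, h (i + 1) le_rfl, ih (fun j hj => h j (by omega))]

theorem gQT_congr (M : PACost Q (I × O))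
    (σ : List ((Q → Set (Q × RType Q)) × (Q × RType Q)) → (Q → Set (Q × RType Q)) → Q × RType Q)
    (S S' : ℕ → Q → Set (Q × RType Q)) (i : ℕ) (h : ∀ j ≤ i, S j = S' j) :
    M.gQT σ S i = M.gQT σ S' i := by
  unfold gQT
  rw [gHist_congr M σ S S' i h, h 0 (Nat.zero_le _)]

theorem gQT_zero (M : PACost Q (I × O))
    (σ : List ((Q → Set (Q × RType Q)) × (Q × RType Q)) → (Q → Set (Q × RType Q)) → Q × RType Q)
    (S : ℕ → Q → Set (Q × RType Q)) : M.gQT σ S 0 = (M.qI, M.InitT M.qI) := rfl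

theorem gQT_succ (M : PACost Q (I × O))
    (σ : List ((Q → Set (Q × RType Q)) × (Q × RType Q)) → (Q → Set (Q × RType Q)) → Q × RType Q)
    (S : ℕ → Q → Set (Q × RType Q)) (i : ℕ) :
    M.gQT σ S (i + 1) = σ (M.gHist σ S i) (S (i + 1)) := by
  simp [gQT, gHist]

theorem gHist_fst (M : PACost Q (I × O))
    (σ : List ((Q → Set (Q × RType Q)) × (Q × RType Q)) → (Q → Set (Q × RType Q)) → Q × RType Q)
    (S : ℕ → Q → Set (Q × RType Q)) (i : ℕ) :
    (M.gHist σ S i).map Prod.fst = (List.range (i + 1)).map S := by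
  induction i with
  | zero => rfl
  | succ i ih => rw [List.range_succ]; simp [gHist, ih]

theorem fwd [Inhabited I] [Inhabited O] (M : PACost Q (I × O)) (d : ℕ) (hd : 0 < d)
    (rep : RType Q → Q × List (I × O))
    (hrep : ∀ t : RType Q, (∃ (q : Q) (l : List (I × O)), l ≠ [] ∧ M.runType q l = t) →
      (rep t).2 ≠ [] ∧ M.runType (rep t).1 (rep t).2 = t)
    (h : M.GWinsO d rep) : ∃ f : ℕ → ℕ, DelayFn f ∧ OWins f M.Lang := by
  obtain ⟨σ, hσ⟩ := h
  obtain ⟨D, hD⟩ : ∃ D, D = 2 * d := ⟨_, rfl⟩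
  have hD0 : 0 < D := by omega
  let S : (ℕ → I) → ℕ → Q → Set (Q × RType Q) := fun α i => M.rfun (seg α (D * i) (D * (i + 1)))
  have hlenb : ∀ (α : ℕ → I) m, (seg α (D * m) (D * (m + 1))).length = D := by
    intro α m
    rw [seg_length, Nat.mul_succ]; omega
  have hS : ∀ α i, S α i ∈ M.Rcls d := fun α i => ⟨_, by rw [hlenb, hD], rfl⟩
  let ok : (ℕ → I) → ℕ → List O → Prop := fun α m y => y.length = D ∧
    (M.gQT σ (S α) (m + 1)).1 = ((seg α (D * m) (D * (m + 1))).zip y).foldl M.δ (M.gQT σ (S α) m).1 ∧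
    M.runType (M.gQT σ (S α) m).1 ((seg α (D * m) (D * (m + 1))).zip y) = (M.gQT σ (S α) (m + 1)).2
  let out : (ℕ → I) → ℕ → List O := fun α m => Classical.epsilon (ok α m)
  have hout : ∀ α m, ok α m (out α m) := by
    intro α m
    apply Classical.epsilon_spec
    obtain ⟨y, hy, hys⟩ := (mem_rfun M _ _ _).1 ((hσ (S α) (hS α)).1 m)
    exact ⟨y, by rw [hy, hlenb], by rw [hys], by rw [hys]⟩
  have hcausal : ∀ α α' m, (∀ j < D * (m + 2), α j = α' j) → out α m = out α' m := by
    intro α α' m hα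
    have hSS : ∀ j ≤ m + 1, S α j = S α' j := by
      intro j hj
      simp only [S]
      rw [seg_congr α α']
      intro l hl
      exact hα l (lt_of_lt_of_le hl (Nat.mul_le_mul_left _ (by omega)))
    have : ok α m = ok α' m := by
      funext y
      simp only [ok]
      rw [gQT_congr M σ (S α) (S α') m (fun j hj => hSS j (by omega)),
        gQT_congr M σ (S α) (S α') (m + 1) hSS, seg_congr α α']
      intro l hl
      exact hα l (lt_of_lt_of_le hl (Nat.mul_le_mul_left _ (by omega)))
    simp only [out]
    rw [this]
  refine ⟨fun i => if i = 0 then 2 * D else 1, ?_,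
    fun w => (out (fun n => w.getD n default) ((w.length - 2 * D) / D)).getD
      ((w.length - 2 * D) % D) default, ?_⟩
  · intro i
    dsimp only
    split_ifs <;> omega
  intro u v hu hv
  have hune : ∀ i, u i ≠ [] := by
    intro i
    apply List.length_pos_iff.1
    rw [hu]
    dsimp only
    split_ifs <;> omega
  have hbd : ∀ i, bd u (i + 1) = 2 * D + i := by
    intro i
    induction i with
    | zero => rw [bd_succ, hu]; simp [bd]
    | succ i ih => rw [bd_succ, ih, hu]; simp; omega
  obtain ⟨α, hα⟩ : ∃ α, α = flatWord u := ⟨_, rfl⟩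
  have hoH : ∀ i, oHist u i = seg α 0 (2 * D + i) := by
    intro i
    rw [hα, ← hbd, seg_flatWord_zero u hune]; rfl
  have hv' : ∀ i, v i = (out α (i / D)).getD (i % D) default := by
    intro i
    rw [hv, hoH]
    simp only [seg_length]
    rw [show 2 * D + i - 0 - 2 * D = i by omega]
    congr 1
    apply hcausal
    intro j hj
    dsimp only
    rw [seg_getD, Nat.zero_add]
    have h1 : D * (i / D + 2) = D * (i / D) + 2 * D := by ring
    have h2 := Nat.mul_div_le i D
    omega
  rw [← hα]
  let U : ℕ → List (I × O) := fun m => (seg α (D * m) (D * (m + 1))).zip (out α m)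
  have hUlen : ∀ m, (U m).length = D := by
    intro m
    simp only [U, List.length_zip, hlenb, (hout α m).1, min_self]
  have hUne : ∀ m, U m ≠ [] := fun m => List.length_pos_iff.1 (by rw [hUlen]; exact hD0)
  have hW : (fun n => (α n, v n)) = flatWord U := by
    have hsm : StrictMono (fun m => D * m) := fun a b hab => Nat.mul_lt_mul_of_pos_left hab hD0
    have h1 := flatWord_seg (fun n => (α n, v n)) (fun m => D * m) hsm (Nat.mul_zero D)
    rw [← h1]
    congr 1
    funext m
    apply List.ext_getElem
    · rw [hUlen, seg_length, Nat.mul_succ]; omega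
    · intro i h2 h3
      rw [hUlen] at h3
      rw [seg_getElem]
      simp only [U, List.getElem_zip, seg_getElem]
      rw [hv', Nat.mul_add_div hD0, Nat.mul_add_mod, Nat.div_eq_of_lt h3, Nat.mod_eq_of_lt h3,
        Nat.add_zero, List.getD_eq_getElem]
  show M.Accepting M.qI _
  rw [hW]
  let T : ℕ → RType Q := fun i => (M.gQT σ (S α) (i + 1)).2
  have hTU : ∀ i, M.runType (M.gQT σ (S α) i).1 (U i) = T i := fun i => (hout α i).2.2
  have hT1 : ∀ i, (T i).1 = (M.gQT σ (S α) i).1 := fun i => by rw [← hTU]; rfl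
  have hT2 : ∀ i, (T i).2.1 = (M.gQT σ (S α) (i + 1)).1 := fun i => by
    rw [← hTU, (hout α i).2.1]; rfl
  have hr : ∀ i, (rep (T i)).2 ≠ [] ∧ M.runType (rep (T i)).1 (rep (T i)).2 = T i := fun i =>
    hrep _ ⟨_, _, hUne i, hTU i⟩
  have hr1 : ∀ i, (rep (T i)).1 = (T i).1 := fun i => by
    have := congrArg Prod.fst (hr i).2
    exact this
  have hacc := (hσ (S α) (hS α)).2
  have h0 : (T 0).1 = M.qI := hT1 0
  have hr0 : (rep (M.gQT σ (S α) 1).2).1 = M.qI := (hr1 0).trans h0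
  rw [hr0] at hacc
  refine transfer M M.qI (fun i => (rep (T i)).2) U (fun i => (hr i).1) hUne D
    (fun i => (hUlen i).le) T (fun i => ?_) (fun i => ?_) h0 (fun i => ?_) hacc
  · have := (hr i).2
    rwa [hr1] at this
  · rw [hT1, hTU]
  · rw [hT1, hT2]

theorem seg_pair_zip (α : ℕ → I) (v : ℕ → O) (a b : ℕ) :
    seg (fun n => (α n, v n)) a b = (seg α a b).zip (seg v a b) := by
  apply List.ext_getElem
  · simp [seg_length]
  · intro i h1 h2
    simp [seg_getElem]

/-- Player I's accumulated input in the simulation -/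
def bX (pick : (Q → Set (Q × RType Q)) → ℕ → List I) (F : ℕ → ℕ)
    (S : ℕ → Q → Set (Q × RType Q)) : ℕ → List I
  | 0 => []
  | i + 1 => bX pick F S i ++ pick (S i) (F (bX pick F S i).length + 1)

/-- Player I's blocks in the simulation -/
def bB (pick : (Q → Set (Q × RType Q)) → ℕ → List I) (F : ℕ → ℕ)
    (S : ℕ → Q → Set (Q × RType Q)) (i : ℕ) : List I :=
  pick (S i) (F (bX pick F S i).length + 1)

theorem bX_congr (pick : (Q → Set (Q × RType Q)) → ℕ → List I) (F : ℕ → ℕ)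
    (S S' : ℕ → Q → Set (Q × RType Q)) (i : ℕ) (h : ∀ j < i, S j = S' j) :
    bX pick F S i = bX pick F S' i := by
  induction i with
  | zero => rfl
  | succ i ih => simp only [bX]; rw [ih (fun j hj => h j (by omega)), h i (by omega)]

theorem bX_eq (pick : (Q → Set (Q × RType Q)) → ℕ → List I) (F : ℕ → ℕ)
    (S : ℕ → Q → Set (Q × RType Q)) (i : ℕ) :
    bX pick F S i = ((List.range i).map (bB pick F S)).flatten := by
  induction i with
  | zero => rfl
  | succ i ih =>
    rw [List.range_succ, List.map_append, List.flatten_append, ← ih]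
    simp [bX, bB]

theorem bwd [Inhabited I] [Inhabited O] (M : PACost Q (I × O)) (d : ℕ)
    (rep : RType Q → Q × List (I × O))
    (hrep : ∀ t : RType Q, (∃ (q : Q) (l : List (I × O)), l ≠ [] ∧ M.runType q l = t) →
      (rep t).2 ≠ [] ∧ M.runType (rep t).1 (rep t).2 = t)
    (hpump : ∀ r ∈ M.Rcls d, ∀ N, ∃ x : List I, N ≤ x.length ∧ M.rfun x = r)
    (f : ℕ → ℕ) (hf : DelayFn f) (h : OWins f M.Lang) : M.GWinsO d rep := by
  obtain ⟨τ, hτ⟩ := h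
  let pick : (Q → Set (Q × RType Q)) → ℕ → List I := fun r N =>
    Classical.epsilon fun x => N ≤ x.length ∧ M.rfun x = r
  have hpick : ∀ r ∈ M.Rcls d, ∀ N, N ≤ (pick r N).length ∧ M.rfun (pick r N) = r :=
    fun r hr N => Classical.epsilon_spec (hpump r hr N)
  let F : ℕ → ℕ := fun j => ∑ l ∈ Finset.range j, f l
  have hFs : StrictMono F := by
    apply strictMono_nat_of_lt_succ
    intro i
    simp only [F, Finset.sum_range_succ]
    have := hf i
    omega
  let b := bB pick F
  let α : (ℕ → Q → Set (Q × RType Q)) → ℕ → I := fun S => flatWord (b S)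
  let W : (ℕ → Q → Set (Q × RType Q)) → ℕ → I × O := fun S n =>
    (α S n, τ (seg (α S) 0 (F (n + 1))))
  let target : (ℕ → Q → Set (Q × RType Q)) → ℕ → Q × RType Q := fun S i =>
    (M.stateAt M.qI (W S) (bd (b S) (i + 1)),
      M.runType (M.stateAt M.qI (W S) (bd (b S) i)) (seg (W S) (bd (b S) i) (bd (b S) (i + 1))))
  have hXlen : ∀ S i, (bX pick F S i).length = bd (b S) i := by
    intro S i
    rw [bX_eq, flatten_length]
  -- facts about valid sequences
  have hblen : ∀ S, (∀ i, S i ∈ M.Rcls d) → ∀ i, F (bd (b S) i) + 1 ≤ (b S i).length := by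
    intro S hS i
    rw [← hXlen]
    exact (hpick (S i) (hS i) _).1
  have hbne : ∀ S, (∀ i, S i ∈ M.Rcls d) → ∀ i, b S i ≠ [] := by
    intro S hS i
    apply List.length_pos_iff.1
    have := hblen S hS i
    omega
  have hbr : ∀ S, (∀ i, S i ∈ M.Rcls d) → ∀ i, M.rfun (b S i) = S i := fun S hS i =>
    (hpick (S i) (hS i) _).2
  have hFbd : ∀ S, (∀ i, S i ∈ M.Rcls d) → ∀ i, F (bd (b S) i) ≤ bd (b S) (i + 1) := by
    intro S hS i
    rw [bd_succ]
    have := hblen S hS i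
    omega
  have hcausal : ∀ S S', (∀ i, S i ∈ M.Rcls d) → (∀ i, S' i ∈ M.Rcls d) → ∀ i,
      (∀ j < i + 2, S j = S' j) → target S i = target S' i := by
    intro S S' hS hS' i hSS
    have hX : ∀ j ≤ i + 2, bX pick F S j = bX pick F S' j := fun j hj =>
      bX_congr pick F S S' j (fun l hl => hSS l (by omega))
    have hbd : ∀ j ≤ i + 2, bd (b S) j = bd (b S') j := fun j hj => by
      rw [← hXlen, ← hXlen, hX j hj]
    have hα : ∀ n < bd (b S) (i + 2), α S n = α S' n := by
      intro n hn
      simp only [α]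
      rw [flatWord_eq (b S) (hbne S hS) (i + 2) n hn,
        flatWord_eq (b S') (hbne S' hS') (i + 2) n (by rw [← hbd _ le_rfl]; exact hn),
        ← bX_eq, ← bX_eq, hX _ le_rfl]
    have hW : ∀ n < bd (b S) (i + 1), W S n = W S' n := by
      intro n hn
      have h1 : F (n + 1) ≤ bd (b S) (i + 2) :=
        (hFs.monotone (show n + 1 ≤ _ from hn)).trans (hFbd S hS (i + 1))
      have h2 : n < F (n + 1) := by have := hFs.id_le (n + 1); simp at this; omega
      simp only [W]
      rw [hα n (by omega), seg_congr (α S) (α S') 0 (F (n + 1)) (fun j hj => hα j (by omega))]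
    have hmono : bd (b S) i ≤ bd (b S) (i + 1) := by rw [bd_succ]; omega
    simp only [target]
    rw [← hbd (i + 1) (by omega), ← hbd i (by omega),
      stateAt_congr M M.qI (W S) (W S') _ hW,
      stateAt_congr M M.qI (W S) (W S') (bd (b S) i) (fun j hj => hW j (by omega)),
      seg_congr (W S) (W S') _ _ hW]
  let σ : List ((Q → Set (Q × RType Q)) × (Q × RType Q)) → (Q → Set (Q × RType Q)) → Q × RType Q :=
    fun h s => target (fun j => ((h.map Prod.fst) ++ [s]).getD j s) (h.length - 1)
  refine ⟨σ, fun S hS => ?_⟩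
  have hg : ∀ i, M.gQT σ S (i + 1) = target S i := by
    intro i
    rw [gQT_succ]
    simp only [σ]
    have hlen : (M.gHist σ S i).length = i + 1 := by
      have := congrArg List.length (gHist_fst M σ S i)
      simpa using this
    rw [hlen, gHist_fst]
    have hl : (List.range (i + 1)).map S ++ [S (i + 1)] = (List.range (i + 2)).map S := by
      rw [List.range_succ (n := i + 1)]; simp
    rw [hl]
    have hval : ∀ j < i + 2, ((List.range (i + 2)).map S).getD j (S (i + 1)) = S j := by
      intro j hj
      rw [List.getD_eq_getElem _ _ (by simpa using hj)]
      simp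
    apply hcausal _ _ _ hS i hval
    intro j
    by_cases hj : j < i + 2
    · rw [hval j hj]; exact hS j
    · rw [List.getD_eq_default _ _ (by simp; omega)]
      exact hS _
  have hg1 : ∀ i, (M.gQT σ S i).1 = M.stateAt M.qI (W S) (bd (b S) i) := by
    intro i
    rcases i with _ | i
    · rfl
    · rw [hg]
  have hsm := bd_strictMono (b S) (hbne S hS)
  have hfold : ∀ i, (seg (W S) (bd (b S) i) (bd (b S) (i + 1))).foldl M.δ
      (M.stateAt M.qI (W S) (bd (b S) i)) = M.stateAt M.qI (W S) (bd (b S) (i + 1)) := by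
    intro i
    have hlt := hsm (Nat.lt_add_one i)
    rw [seg_eq_shift, foldl_seg, ← stateAt_add]
    congr 1; omega
  constructor
  · intro i
    rw [hg, hg1, ← hbr S hS i, mem_rfun]
    refine ⟨seg (fun n => τ (seg (α S) 0 (F (n + 1)))) (bd (b S) i) (bd (b S) (i + 1)), ?_, ?_⟩
    · rw [seg_length, bd_succ]; omega
    · have : seg (W S) (bd (b S) i) (bd (b S) (i + 1)) = (b S i).zip
        (seg (fun n => τ (seg (α S) 0 (F (n + 1)))) (bd (b S) i) (bd (b S) (i + 1))) := by
        simp only [W]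
        rw [seg_pair_zip, seg_flatWord (b S) (hbne S hS)]
      rw [← this]
      simp only [target]
      rw [hfold]
  · -- acceptance
    have hWL : M.Accepting M.qI (W S) := by
      have h1 := hτ (fun i => seg (α S) (F i) (F (i + 1))) (fun n => τ (seg (α S) 0 (F (n + 1))))
        (by intro i
            rw [seg_length]
            simp only [F, Finset.sum_range_succ]
            omega)
        (by intro i
            simp only [oHist]
            rw [flatten_seg (α S) F hFs.monotone]
            simp [F])
      rw [flatWord_seg (α S) F hFs (by simp [F])] at h1
      exact h1
    let T : ℕ → RType Q := fun i => (M.gQT σ S (i + 1)).2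
    let U : ℕ → List (I × O) := fun i => seg (W S) (bd (b S) i) (bd (b S) (i + 1))
    have hUne : ∀ i, U i ≠ [] := by
      intro i
      apply List.length_pos_iff.1
      have := hsm (Nat.lt_add_one i)
      simp only [U, seg_length]
      omega
    have hTU : ∀ i, M.runType (M.stateAt M.qI (W S) (bd (b S) i)) (U i) = T i := by
      intro i
      simp only [T, hg, target, U]
    have hT1 : ∀ i, (T i).1 = M.stateAt M.qI (W S) (bd (b S) i) := fun i => by rw [← hTU]; rfl
    have hT2 : ∀ i, (T i).2.1 = M.stateAt M.qI (W S) (bd (b S) (i + 1)) := fun i => by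
      rw [← hTU, ← hfold]; rfl
    have hr : ∀ i, (rep (T i)).2 ≠ [] ∧ M.runType (rep (T i)).1 (rep (T i)).2 = T i := fun i =>
      hrep _ ⟨_, _, hUne i, hTU i⟩
    have hr1 : ∀ i, (rep (T i)).1 = (T i).1 := fun i => by
      have := congrArg Prod.fst (hr i).2
      exact this
    have h0 : (T 0).1 = M.qI := hT1 0
    have hr0 : (rep (M.gQT σ S 1).2).1 = M.qI := (hr1 0).trans h0
    rw [hr0]
    have hUW : flatWord U = W S := flatWord_seg (W S) (bd (b S)) hsm rfl
    rw [← hUW] at hWL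
    refine transfer M M.qI U (fun i => (rep (T i)).2) hUne (fun i => (hr i).1)
      (M.Tfin.sup fun t => (rep t).2.length) (fun i => ?_) T (fun i => ?_) (fun i => ?_) h0
      (fun i => ?_) hWL
    · apply Finset.le_sup (f := fun t => (rep t).2.length)
      rw [← hTU]
      exact runType_mem _ _ _
    · rw [hT1, hTU]
    · have := (hr i).2
      rwa [hr1] at this
    · rw [hT1, hT2]

end aux2

end PACost

/-- Lemma 2, equivalence of the abstract game and the delay game.
With `d = 2^(2n⁴k²)` and fixed representative runs `rep t` for all realized types `t`,
Player O wins the abstract game `𝒢(A)` iff she wins the delay game `Γ_f(L(A))` for some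
delay function `f`. -/
theorem statement8 {Q I O : Type} [Fintype Q] [Fintype I] [Fintype O]
    [Inhabited I] [Inhabited O]
    (M : PACost Q (I × O)) (n k : ℕ)
    (hn : Fintype.card Q = n) (hk : (Finset.univ.image M.Ω).card = k)
    (he : ∃ q, Even (M.Ω q)) (ho : ∃ q, Odd (M.Ω q))
    (rep : PACost.RType Q → Q × List (I × O))
    (hrep : ∀ t : PACost.RType Q,
      (∃ (q : Q) (l : List (I × O)), l ≠ [] ∧ M.runType q l = t) →
      (rep t).2 ≠ [] ∧ M.runType (rep t).1 (rep t).2 = t) :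
    M.GWinsO (2 ^ (2 * n ^ 4 * k ^ 2)) rep ↔
      ∃ f : ℕ → ℕ, DelayFn f ∧ OWins f M.Lang := by
  subst hn hk
  have hd := Nat.pow_le_pow_right (show 0 < 2 by norm_num) (M.Tfin_card he ho)
  constructor
  · intro h
    exact M.fwd _ (by positivity) rep hrep h
  · rintro ⟨f, hf, h⟩
    exact M.bwd _ rep hrep (fun r hr N => M.pump _ hd r hr N) f hf h
end
end
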